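/- arXiv:2506.22906 — 11 statements merged into one kernel-verified Lean document; each statement's English description precedes it below -/
import Mathlib

section
/- Let G be a finite group and H a normal abelian subgroup of G such that G/H is cyclic. Then for each x ∈ G such that G = H⟨x⟩, and each integer a coprime to |G| with a ≡ 1 (mod |G/H|), there exists an automorphism α of G such that α(h) = h^a for every h ∈ H and α(x) = x^a. -/
/-!
Every element of `G` has the form `h * x ^ k` with `h ∈ H`, and the automorphism is
`h * x ^ k ↦ h ^ a * x ^ (a * k)`. It is well defined because the two prescriptions agree on
`H ∩ ⟨x⟩`. It is multiplicative because `x ^ (a - 1)` lies in `H` (as `|G/H|` divides `a - 1`), so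
it centralizes the abelian group `H`, and hence `x ^ (a * k)` and `x ^ k` act in the same way on
`H` by conjugation. It is surjective because `a` has an inverse `b` modulo `|G|`: the image
contains `h = (h ^ b) ^ a` for every `h ∈ H`, and `x = (x ^ b) ^ a`.
-/

/-- Let `G` be a finite group and `H` a normal abelian subgroup of `G` such that `G/H` is
cyclic.  Then for each `x ∈ G` with `G = H⟨x⟩`, and each integer `a` coprime to `|G|` with
`a ≡ 1 (mod |G/H|)`, there is an automorphism `α` of `G` with `α(h) = h^a` for all `h ∈ H`
and `α(x) = x^a`. -/
theorem lemma_abel_n_a (G : Type*) [Group G] [Finite G]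
    (H : Subgroup G) [H.Normal] (habH : ∀ h k : G, h ∈ H → k ∈ H → h * k = k * h)
    (hcyc : IsCyclic (G ⧸ H))
    (x : G) (hx : H ⊔ Subgroup.zpowers x = ⊤)
    (a : ℤ) (hcop : Int.gcd a (Nat.card G) = 1)
    (hmod : (H.index : ℤ) ∣ a - 1) :
    ∃ α : MulAut G, (∀ h ∈ H, α h = h ^ a) ∧ α x = x ^ a := by
  have hex : ∀ g : G, ∃ p : G × ℤ, p.1 ∈ H ∧ g = p.1 * x ^ p.2 := by
    intro g
    have hg : g ∈ H ⊔ Subgroup.zpowers x := hx ▸ Subgroup.mem_top g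
    rw [Subgroup.mem_sup_of_normal_left] at hg
    obtain ⟨h, hh, _, ⟨k, rfl⟩, rfl⟩ := hg
    exact ⟨(h, k), hh, rfl⟩
  choose p hpH hp using hex
  let f : G → G := fun g => (p g).1 ^ a * x ^ (a * (p g).2)
  -- `f` does not depend on the chosen decompositions
  have key : ∀ h ∈ H, ∀ k : ℤ, f (h * x ^ k) = h ^ a * x ^ (a * k) := by
    intro h hh k
    have e := hp (h * x ^ k)
    have hqH := hpH (h * x ^ k)
    change (p (h * x ^ k)).1 ^ a * x ^ (a * (p (h * x ^ k)).2) = _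
    generalize p (h * x ^ k) = q at e hqH ⊢
    obtain ⟨h', k'⟩ := q
    simp only at e hqH ⊢
    have e1 : h'⁻¹ * h = x ^ (k' - k) := by
      rw [zpow_sub, inv_mul_eq_iff_eq_mul, ← mul_assoc, ← e, mul_inv_cancel_right]
    have hc : Commute h'⁻¹ h := habH _ _ (H.inv_mem hqH) hh
    have e2 : (h' ^ a)⁻¹ * h ^ a = x ^ (a * k' - a * k) := by
      rw [← mul_sub, mul_comm a, zpow_mul, ← e1, hc.mul_zpow, inv_zpow]
    rw [zpow_sub, inv_mul_eq_iff_eq_mul] at e2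
    rw [e2, mul_assoc, inv_mul_cancel_right]
  have hxa : x ^ (a - 1) ∈ H := by
    obtain ⟨c, hc⟩ := hmod
    rw [hc, zpow_mul, zpow_natCast]
    exact H.zpow_mem (H.pow_index_mem x) c
  have hconj : ∀ h ∈ H, ∀ k : ℤ, x ^ (a * k) * h = x ^ k * h * x ^ (-k) * x ^ (a * k) := by
    intro h hh k
    have hcomm : x ^ ((a - 1) * k) * h = h * x ^ ((a - 1) * k) :=
      habH _ _ (by rw [zpow_mul]; exact H.zpow_mem hxa k) hh
    have e : a * k = k + (a - 1) * k := by ring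
    rw [e, zpow_add, mul_assoc, hcomm]
    group
  have hmul : ∀ g g', f (g * g') = f g * f g' := by
    intro g g'
    obtain ⟨h, k, hh, rfl⟩ : ∃ h k, h ∈ H ∧ g = h * x ^ k := ⟨_, (p g).2, hpH g, hp g⟩
    obtain ⟨h', k', hh', rfl⟩ : ∃ h k, h ∈ H ∧ g' = h * x ^ k := ⟨_, (p g').2, hpH g', hp g'⟩
    have hcH : x ^ k * h' * x ^ (-k) ∈ H := by
      rw [zpow_neg]; exact Subgroup.Normal.conj_mem ‹_› _ hh' _
    have e : h * x ^ k * (h' * x ^ k') = (h * (x ^ k * h' * x ^ (-k))) * x ^ (k + k') := by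
      rw [zpow_add]; group
    have hc : Commute h (x ^ k * h' * x ^ (-k)) := habH _ _ hh hcH
    have e3 : (x ^ k * h' * x ^ (-k)) ^ a = x ^ k * h' ^ a * x ^ (-k) := by
      rw [zpow_neg, conj_zpow]
    rw [e, key _ (H.mul_mem hh hcH), key _ hh, key _ hh', hc.mul_zpow, e3, mul_add, zpow_add]
    have e4 := hconj (h' ^ a) (H.zpow_mem hh' a) k
    calc _ = h ^ a * (x ^ k * h' ^ a * x ^ (-k) * x ^ (a * k)) * x ^ (a * k') := by
          simp only [mul_assoc]
      _ = _ := by rw [← e4]; simp only [mul_assoc]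
  let φ : G →* G := MonoidHom.mk' f hmul
  have hφH : ∀ h ∈ H, φ h = h ^ a := fun h hh => by
    change f h = h ^ a
    have := key h hh 0
    simpa using this
  have hφx : φ x = x ^ a := by
    change f x = x ^ a
    have := key 1 H.one_mem 1
    simpa using this
  obtain ⟨b, hb⟩ : ∃ b : ℤ, ∀ g : G, (g ^ a) ^ b = g := by
    refine ⟨Int.gcdA a (Nat.card G), fun g => ?_⟩
    have hbez := Int.gcd_eq_gcd_ab a (Nat.card G)
    rw [hcop] at hbez
    have h1 : a * Int.gcdA a (Nat.card G) = 1 - Nat.card G * Int.gcdB a (Nat.card G) := by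
      push_cast at hbez
      linarith
    rw [← zpow_mul, h1, zpow_sub, zpow_mul, zpow_natCast, pow_card_eq_one']
    simp
  have hsurj : Function.Surjective φ := by
    rw [← MonoidHom.range_eq_top, eq_top_iff, ← hx, sup_le_iff, Subgroup.zpowers_le]
    refine ⟨fun h hh => ⟨h ^ b, ?_⟩, ⟨x ^ b, ?_⟩⟩
    · rw [map_zpow, hφH h hh, hb]
    · rw [map_zpow, hφx, hb]
  exact ⟨MulEquiv.ofBijective φ ⟨Finite.injective_iff_surjective.mpr hsurj, hsurj⟩, hφH, hφx⟩
end

section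
/- If a finite group G contains a normal abelian subgroup of index at most 3, then 𝒩_G = 0, i.e., the number of ℝ-Aut(G)-conjugacy classes of elements of G equals the number of ℚ-Aut(G)-conjugacy classes of elements of G. -/
/-!
The two relations coincide, so the numbers of classes agree. The content is that an element `y`
is mapped to any other generator `y ^ k` of `⟨y⟩`, or to its inverse, by an automorphism; here `k`
may be chosen coprime to `|G|`.

Suppose `H` is normal and abelian with `G / H` cyclic, generated by the image of `t`, and let `k`
be coprime to `|G|` with `t ^ (k - 1) ∈ H`. Then `t ^ i * h ↦ t ^ (i * k) * h ^ k` is an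
automorphism of `G` (`exists_aut_zpow`): it is multiplicative because `t ^ (k - 1)` centralises
`H`. When the index is at most `3`, every `k` coprime to `|G|` satisfies `k ≡ 1` or `-k ≡ 1`
modulo the index. For `y ∉ H` one takes `t = y`; for `y ∈ H` any generator `t` of the quotient
will do. In both cases the automorphism sends `y` to `y ^ k` or to `y ^ (-k)`.
-/

/-- Two elements `g, h` of `G` are ℝ-`A`-conjugate if some `α ∈ A` sends `h` or `h⁻¹` to `g`. -/
def RConjRel {G : Type*} [Group G] (A : Subgroup (MulAut G)) (g h : G) : Prop :=
  ∃ α ∈ A, α h = g ∨ α h⁻¹ = g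

/-- Two elements `g, h` of `G` are ℚ-`A`-conjugate if some `α ∈ A` maps `⟨h⟩` onto `⟨g⟩`. -/
def QConjRel {G : Type*} [Group G] (A : Subgroup (MulAut G)) (g h : G) : Prop :=
  ∃ α ∈ A, (Subgroup.zpowers h).map α.toMonoidHom = Subgroup.zpowers g

/-- The number of ℝ-`A`-conjugacy classes of elements of `G`. -/
noncomputable def numRClasses (G : Type*) [Group G] (A : Subgroup (MulAut G)) : ℕ :=
  Nat.card (Quot (RConjRel A))

/-- The number of ℚ-`A`-conjugacy classes of elements of `G`. -/
noncomputable def numQClasses (G : Type*) [Group G] (A : Subgroup (MulAut G)) : ℕ :=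
  Nat.card (Quot (QConjRel A))

/-- If `H` is normal and abelian and `G = ⟨t⟩H`, then for `k` coprime to `|G|` with
`t ^ (k - 1) ∈ H` the `k`-th power maps on `H` and on `⟨t⟩` extend to an automorphism of `G`. -/
lemma exists_aut_zpow {G : Type*} [Group G] [Finite G] (H : Subgroup G) [H.Normal]
    (habH : ∀ h k : G, h ∈ H → k ∈ H → h * k = k * h) (t : G)
    (ht : ∀ x : G, ∃ i : ℤ, t ^ (-i) * x ∈ H) (k : ℤ) (hk : t ^ (k - 1) ∈ H)
    (hcop : IsCoprime k (Nat.card G : ℤ)) :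
    ∃ α : MulAut G, α t = t ^ k ∧ ∀ h ∈ H, α h = h ^ k := by
  choose i hi using ht
  have hmul : ∀ a b : G, a ∈ H → b ∈ H → (a * b) ^ k = a ^ k * b ^ k :=
    fun a b ha hb => Commute.mul_zpow (habH a b ha hb) k
  let f : G → G := fun x => t ^ (i x * k) * (t ^ (-(i x)) * x) ^ k
  -- The value of `f` does not depend on the chosen decomposition.
  have hf : ∀ (j : ℤ) (h : G), h ∈ H → f (t ^ j * h) = t ^ (j * k) * h ^ k := by
    intro j h hh
    set n := i (t ^ j * h) with hn
    have hnH : t ^ (-n) * (t ^ j * h) ∈ H := hi (t ^ j * h)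
    have hd : t ^ (j - n) ∈ H := by
      have := H.mul_mem hnH (H.inv_mem hh)
      have e : t ^ (-n) * (t ^ j * h) * h⁻¹ = t ^ (j - n) := by
        rw [sub_eq_neg_add, zpow_add]; group
      rwa [e] at this
    have e : t ^ (-n) * (t ^ j * h) = t ^ (j - n) * h := by
      rw [sub_eq_neg_add, zpow_add, mul_assoc]
    change t ^ (n * k) * (t ^ (-n) * (t ^ j * h)) ^ k = _
    rw [e, hmul _ _ hd hh, ← mul_assoc, ← zpow_mul, ← zpow_add]
    congr 2
    ring
  have hdec : ∀ x : G, ∃ (j : ℤ) (h : G), h ∈ H ∧ x = t ^ j * h := fun x =>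
    ⟨i x, _, hi x, by rw [zpow_neg, mul_inv_cancel_left]⟩
  have hkj : ∀ j : ℤ, t ^ (j * k - j) ∈ H := by
    intro j
    have := H.zpow_mem hk j
    rwa [← zpow_mul, show (k - 1) * j = j * k - j by ring] at this
  have hfmul : ∀ x y : G, f (x * y) = f x * f y := by
    intro x y
    obtain ⟨j, h, hh, rfl⟩ := hdec x
    obtain ⟨l, h', hh', rfl⟩ := hdec y
    have hc : t ^ (-l) * h * t ^ l ∈ H := by
      have := Subgroup.Normal.conj_mem ‹H.Normal› h hh (t ^ (-l))
      rwa [← zpow_neg, neg_neg] at this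
    have e : t ^ j * h * (t ^ l * h') = t ^ (j + l) * (t ^ (-l) * h * t ^ l * h') := by
      rw [zpow_add, zpow_neg]; group
    have hpow : (t ^ (-l) * h * t ^ l) ^ k = t ^ (-l) * h ^ k * t ^ l := by
      have := conj_zpow (i := k) (a := t ^ (-l)) (b := h)
      rwa [← zpow_neg, neg_neg] at this
    have hcm := habH _ _ (hkj l) (H.zpow_mem hh k)
    rw [e, hf _ _ (H.mul_mem hc hh'), hf _ _ hh, hf _ _ hh', hmul _ _ hc hh', hpow]
    calc t ^ ((j + l) * k) * (t ^ (-l) * h ^ k * t ^ l * h' ^ k)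
        = t ^ (j * k) * (t ^ (l * k - l) * h ^ k) * t ^ l * h' ^ k := by
          rw [show (j + l) * k = j * k + l * k by ring, sub_eq_add_neg, zpow_add, zpow_add]
          simp only [mul_assoc]
      _ = t ^ (j * k) * h ^ k * (t ^ (l * k) * h' ^ k) := by
          rw [hcm, show t ^ (l * k) = t ^ (l * k - l) * t ^ l by rw [← zpow_add]; simp]
          simp only [mul_assoc]
  let F : G →* G := MonoidHom.mk' f hfmul
  have hF1 : ∀ h ∈ H, f h = h ^ k := by
    intro h hh
    simpa using hf 0 h hh
  have hinj : Function.Injective F := by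
    rw [injective_iff_map_eq_one]
    intro x hx
    obtain ⟨j, h, hh, rfl⟩ := hdec x
    have h1 : t ^ (j * k) * h ^ k = 1 := by rw [← hf j h hh]; exact hx
    have h2 : t ^ (j * k) ∈ H := by
      rw [eq_inv_of_mul_eq_one_left h1]; exact H.inv_mem (H.zpow_mem hh k)
    have h3 : t ^ j ∈ H := by
      have := H.mul_mem (H.inv_mem (hkj j)) h2
      rwa [← zpow_neg, ← zpow_add, show -(j * k - j) + j * k = j by ring] at this
    have h4 : (t ^ j * h) ^ k = 1 := by rw [← hF1 _ (H.mul_mem h3 hh)]; exact hx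
    obtain ⟨u, v, huv⟩ := hcop
    have h5 : (t ^ j * h) ^ (Nat.card G : ℤ) = 1 := by rw [zpow_natCast, pow_card_eq_one']
    rw [← zpow_one (t ^ j * h), ← huv, zpow_add, mul_comm u, mul_comm v, zpow_mul, zpow_mul,
      h4, h5, one_zpow, one_zpow, one_mul]
  refine ⟨MulEquiv.ofBijective F (Finite.injective_iff_bijective.mp hinj), ?_, fun h hh => hF1 h hh⟩
  change f t = t ^ k
  simpa using hf 1 1 H.one_mem

/-- In index at most `3`, the quotient by `H` is cyclic; moreover every `y ∉ H` generates it. -/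
lemma exists_cover {G : Type*} [Group G] [Finite G] (H : Subgroup G) [H.Normal]
    (hidx : H.index ≤ 3) (y : G) :
    ∃ t : G, (∀ x : G, ∃ i : ℤ, t ^ (-i) * x ∈ H) ∧ (y ∈ H ∨ t = y) := by
  by_cases hH : H = ⊤
  · exact ⟨1, by simp [hH], by simp [hH]⟩
  have hp : Nat.Prime H.index := by
    have h0 := H.index_ne_zero_of_finite
    have h1 : H.index ≠ 1 := fun h => hH (Subgroup.index_eq_one.mp h)
    have : H.index = 2 ∨ H.index = 3 := by omega
    rcases this with h | h <;> rw [h] <;> norm_num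
  have hcov : ∀ t : G, t ∉ H → ∀ x : G, ∃ i : ℤ, t ^ (-i) * x ∈ H := by
    intro t ht x
    have : Fact (Nat.Prime H.index) := ⟨hp⟩
    have ht' : (t : G ⧸ H) ≠ 1 := by rwa [Ne, QuotientGroup.eq_one_iff]
    obtain ⟨i, hi⟩ := Subgroup.mem_zpowers_iff.mp
      (mem_zpowers_of_prime_card (p := H.index) (g := (t : G ⧸ H)) (g' := (x : G ⧸ H)) rfl ht')
    refine ⟨i, ?_⟩
    rw [zpow_neg, ← QuotientGroup.eq]
    simpa using hi
  by_cases hy : y ∈ H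
  · obtain ⟨t, ht⟩ : ∃ t, t ∉ H := by
      by_contra! h
      exact hH ((Subgroup.eq_top_iff' H).mpr h)
    exact ⟨t, hcov t ht, Or.inl hy⟩
  · exact ⟨y, hcov y hy, Or.inr rfl⟩

/-- A generator of `⟨y⟩` is a power of `y` with exponent coprime to the order of the whole group,
because units lift along `ZMod |G| → ZMod (orderOf y)`. -/
lemma exists_coprime_exponent {G : Type*} [Group G] [Finite G] {y g : G}
    (h : Subgroup.zpowers y = Subgroup.zpowers g) :
    ∃ k : ℕ, k.Coprime (Nat.card G) ∧ y ^ k = g := by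
  have hg : g ∈ Subgroup.zpowers y := h ▸ Subgroup.mem_zpowers g
  obtain ⟨m, rfl⟩ := (mem_powers_iff_mem_zpowers.mpr hg)
  simp only at h ⊢
  have ho : orderOf (y ^ m) = orderOf y := by
    rw [← Nat.card_zpowers, ← Nat.card_zpowers, h]
  have hm : m.Coprime (orderOf y) := by
    rw [orderOf_pow] at ho
    have hd := Nat.gcd_dvd_left (orderOf y) m
    have h3 := Nat.div_mul_cancel hd
    rw [ho] at h3
    have h4 : 0 < orderOf y := orderOf_pos y
    rw [Nat.coprime_comm]
    exact Nat.eq_of_mul_eq_mul_left h4 (by rw [h3, mul_one])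
  have hdvd : orderOf y ∣ Nat.card G := orderOf_dvd_natCard y
  have : NeZero (Nat.card G) := ⟨Nat.card_pos.ne'⟩
  obtain ⟨u, hu⟩ := ZMod.unitsMap_surjective hdvd (ZMod.unitOfCoprime m hm)
  refine ⟨(u : ZMod (Nat.card G)).val, ZMod.val_coe_unit_coprime u, ?_⟩
  rw [pow_eq_pow_iff_modEq, ← ZMod.natCast_eq_natCast_iff]
  have := congrArg Units.val hu
  rw [ZMod.unitsMap_val, ZMod.coe_unitOfCoprime] at this
  rw [← this, ZMod.natCast_val]

/-- If a finite group `G` contains a normal abelian subgroup of index at most 3, then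
the number of ℝ-Aut(G)-conjugacy classes of elements of `G` equals the number of
ℚ-Aut(G)-conjugacy classes, i.e. 𝒩_G = 0. -/
theorem example_abel_index_le_three (G : Type*) [Group G] [Finite G]
    (H : Subgroup G) [H.Normal] (habH : ∀ h k : G, h ∈ H → k ∈ H → h * k = k * h)
    (hidx : H.index ≤ 3) :
    numRClasses G ⊤ = numQClasses G ⊤ := by
  suffices h : RConjRel (⊤ : Subgroup (MulAut G)) = QConjRel ⊤ by
    rw [numRClasses, numQClasses, h]
  funext g h
  apply propext
  have hmap : ∀ α : MulAut G, (Subgroup.zpowers h).map α.toMonoidHom = Subgroup.zpowers (α h) :=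
    fun α => MonoidHom.map_zpowers _ _
  constructor
  · rintro ⟨α, -, hα⟩
    refine ⟨α, trivial, ?_⟩
    rw [hmap]
    rcases hα with rfl | rfl
    · rfl
    · rw [map_inv, Subgroup.zpowers_inv]
  · rintro ⟨α, -, hα⟩
    rw [hmap] at hα
    obtain ⟨k, hk, hkg⟩ := exists_coprime_exponent hα
    obtain ⟨t, ht, hty⟩ := exists_cover H hidx (α h)
    have key : ∀ l : ℤ, IsCoprime l (Nat.card G : ℤ) → (H.index : ℤ) ∣ l - 1 →
        ∃ β : MulAut G, β (α h) = (α h) ^ l := by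
      intro l hl hdvd
      have htl : t ^ (l - 1) ∈ H := by
        obtain ⟨c, hc⟩ := hdvd
        rw [hc, zpow_mul, zpow_natCast]
        exact H.zpow_mem (H.pow_index_mem t) c
      obtain ⟨β, hβt, hβH⟩ := exists_aut_zpow H habH t ht l htl hl
      rcases hty with hy | rfl
      · exact ⟨β, hβH _ hy⟩
      · exact ⟨β, hβt⟩
    have hkc : IsCoprime (k : ℤ) (Nat.card G : ℤ) := Nat.isCoprime_iff_coprime.mpr hk
    have hki : k.Coprime H.index := hk.coprime_dvd_right H.index_dvd_card
    have hcases : (H.index : ℤ) ∣ (k : ℤ) - 1 ∨ (H.index : ℤ) ∣ -(k : ℤ) - 1 := by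
      have h0 := H.index_ne_zero_of_finite
      generalize H.index = n at *
      interval_cases n
      · contradiction
      · left; simp
      · rw [Nat.coprime_two_right] at hki
        obtain ⟨c, rfl⟩ := hki
        left; push_cast; omega
      · have h3 : ¬ 3 ∣ k := fun h => by
          rw [Nat.coprime_comm, Nat.Prime.coprime_iff_not_dvd Nat.prime_three] at hki
          exact hki h
        push_cast; omega
    rcases hcases with hd | hd
    · obtain ⟨β, hβ⟩ := key k hkc hd
      exact ⟨β * α, trivial, Or.inl (by rw [MulAut.mul_apply, hβ, zpow_natCast, hkg])⟩
    · obtain ⟨β, hβ⟩ := key (-k) hkc.neg_left hd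
      refine ⟨β * α, trivial, Or.inr ?_⟩
      rw [MulAut.mul_apply, map_inv, map_inv, hβ, zpow_neg, inv_inv, zpow_natCast, hkg]
end

section
/- Let p be a prime and m ≥ 3 an integer with m dividing p − 1, and let G be a semidirect product C_p ⋊ C_m of a cyclic group of order p by a cyclic group of order m acting faithfully. Then 𝒩_G ≥ φ(m)/2 − 1, where φ is Euler's totient function. In particular, 𝒩_G > 0 if m = 5 or m ≥ 7. -/
namespace CpRtimesCm

/-- Every automorphism of `N ⋊ K` induces the identity on the quotient `K`, when `N` is cyclic of
order `p` coprime to `m = |K|` and the action is faithful. -/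
lemma right_mulAut_apply {p m : ℕ} (hpm : Nat.Coprime p m)
    {N K : Type*} [Group N] [Group K] [IsCyclic N]
    (hN : Nat.card N = p) (hK : Nat.card K = m)
    (φ : K →* MulAut N) (hφ : Function.Injective φ)
    (α : MulAut (N ⋊[φ] K)) (g : N ⋊[φ] K) : (α g).right = g.right := by
  have hinl : ∀ (β : MulAut (N ⋊[φ] K)) (n : N),
      ∃ n' : N, β (SemidirectProduct.inl n) = SemidirectProduct.inl n' := by
    intro β n
    have h1 : (β (SemidirectProduct.inl n)) ^ p = 1 := by
      rw [← map_pow, ← map_pow, ← hN, pow_card_eq_one', map_one, map_one]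
    have h2 : (SemidirectProduct.rightHom (β (SemidirectProduct.inl n))) ^ p = 1 := by
      rw [← map_pow, h1, map_one]
    have h3 : SemidirectProduct.rightHom (β (SemidirectProduct.inl n)) = 1 := by
      rw [← orderOf_eq_one_iff]
      refine Nat.eq_one_of_dvd_coprimes hpm (orderOf_dvd_of_pow_eq_one h2) ?_
      rw [← hK]
      exact orderOf_dvd_natCard _
    refine ⟨(β (SemidirectProduct.inl n)).left, ?_⟩
    ext
    · simp
    · simpa using h3
  have hconj : ∀ (x : N ⋊[φ] K) (n : N),
      x * SemidirectProduct.inl n * x⁻¹ = SemidirectProduct.inl (φ x.right n) := by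
    intro x n
    have h : x * SemidirectProduct.inl n * x⁻¹ =
        SemidirectProduct.inl (x.left * φ x.right n * x.left⁻¹) := by
      ext <;> simp [mul_assoc]
    rw [h, IsMulCommutative.is_comm.comm x.left, mul_inv_cancel_right]
  apply hφ
  -- `φ g.right` raises all of `N` to a fixed power `z`, and taking powers commutes with `α`.
  obtain ⟨z, hz⟩ := MonoidHom.map_cyclic (φ g.right).toMonoidHom
  replace hz : ∀ n, φ g.right n = n ^ z := hz
  ext n
  obtain ⟨n', hn'⟩ := hinl α⁻¹ n
  replace hn' : α (SemidirectProduct.inl n') = SemidirectProduct.inl n := by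
    rw [← hn', MulAut.apply_inv_self]
  apply SemidirectProduct.inl_injective (φ := φ)
  rw [← hconj, ← hn', ← map_inv, ← map_mul, ← map_mul, hconj, hz, hz, map_zpow, map_zpow, hn',
    map_zpow]

lemma four_le_totient {m : ℕ} (h : m = 5 ∨ 7 ≤ m) : 4 ≤ Nat.totient m := by
  have heven : Even (Nat.totient m) := Nat.totient_even (by omega)
  -- As `φ(m)` is even, a unit other than `±1` suffices.
  obtain ⟨a, ha1, ham, hac⟩ : ∃ a, 1 < a ∧ a + 1 < m ∧ Nat.Coprime m a := by
    obtain ⟨k, hk⟩ : ∃ k, m = 2 * k + 1 ∨ m = 4 * k ∨ m = 4 * k + 2 := by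
      have : m % 4 = 0 ∨ m % 4 = 1 ∨ m % 4 = 2 ∨ m % 4 = 3 := by omega
      rcases this with h | h | h | h
      · exact ⟨m / 4, by omega⟩
      · exact ⟨m / 2, by omega⟩
      · exact ⟨m / 4, by omega⟩
      · exact ⟨m / 2, by omega⟩
    rcases hk with rfl | rfl | rfl
    · exact ⟨2, by omega, by omega, by simp⟩
    · refine ⟨2 * k + 1, by omega, by omega, ?_⟩
      rw [← Nat.isCoprime_iff_coprime]
      exact ⟨k, 1 - 2 * k, by push_cast; ring⟩
    · refine ⟨2 * k + 3, by omega, by omega, ?_⟩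
      rw [← Nat.isCoprime_iff_coprime]
      -- With `j = k + 1`, so that `2 * k + 3 = 2 * j + 1` and `4 * k + 2 = 2 * (2 * j + 1) - 4`.
      exact ⟨(k + 1) ^ 2 + (k + 1), 2 * k + 3 - 2 * ((k + 1) ^ 2 + (k + 1)), by push_cast; ring⟩
  have hsub : ({1, a, m - 1} : Finset ℕ) ⊆ (Finset.range m).filter (Nat.Coprime m) := by
    intro x hx
    simp only [Finset.mem_insert, Finset.mem_singleton] at hx
    simp only [Finset.mem_filter, Finset.mem_range]
    rcases hx with rfl | rfl | rfl
    · exact ⟨by omega, by simp⟩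
    · exact ⟨by omega, hac⟩
    · refine ⟨by omega, ?_⟩
      rw [Nat.coprime_self_sub_right (by omega)]
      simp
  have hcard := Finset.card_le_card hsub
  rw [Finset.card_eq_three.mpr ⟨1, a, m - 1, by omega, by omega, by omega, rfl⟩,
    ← Nat.totient_eq_card_coprime] at hcard
  obtain ⟨r, hr⟩ := heven
  omega

/-- If a surjection is constant on `S`, it loses at least `|S| - 1` points. -/
lemma card_add_card_le_of_const {X Y : Type*} [Finite X] (f : X → Y)
    (hf : Function.Surjective f) (S : Finset X) (c : Y) (hS : ∀ x ∈ S, f x = c) :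
    Nat.card Y + S.card ≤ Nat.card X + 1 := by
  classical
  have := Fintype.ofFinite X
  have : Finite Y := Finite.of_surjective f hf
  have := Fintype.ofFinite Y
  rw [Nat.card_eq_fintype_card, Nat.card_eq_fintype_card]
  have hsub : (Finset.univ : Finset Y) ⊆ insert c (Sᶜ.image f) := by
    intro y _
    obtain ⟨x, rfl⟩ := hf y
    by_cases hx : x ∈ S
    · simp [hS x hx]
    · exact Finset.mem_insert_of_mem (Finset.mem_image_of_mem f (by simpa using hx))
  have h1 := Finset.card_le_card hsub
  have h2 := Finset.card_insert_le c (Sᶜ.image f)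
  have h3 := Finset.card_image_le (s := Sᶜ) (f := f)
  have h4 := Finset.card_compl_add_card S
  rw [Finset.card_univ] at h1
  omega

/-- The map from ℝ-classes to ℚ-classes. -/
def classMap {G : Type*} [Group G] (A : Subgroup (MulAut G)) :
    Quot (RConjRel A) → Quot (QConjRel A) :=
  Quot.map id (by
    rintro g h ⟨α, hα, h' | h'⟩
    · exact ⟨α, hα, by rw [MonoidHom.map_zpowers]; exact congrArg Subgroup.zpowers h'⟩
    · refine ⟨α, hα, ?_⟩
      rw [id, id, ← Subgroup.zpowers_inv (g := h), MonoidHom.map_zpowers]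
      exact congrArg Subgroup.zpowers h')

lemma classMap_surjective {G : Type*} [Group G] (A : Subgroup (MulAut G)) :
    Function.Surjective (classMap A) := by
  rintro ⟨g⟩
  exact ⟨Quot.mk _ g, rfl⟩

lemma eq_or_eq_inv_of_mk_eq {G K : Type*} [Group G] [Group K] (A : Subgroup (MulAut G))
    (f : G →* K) (hf : ∀ α ∈ A, ∀ g, f (α g) = f g) {g h : G}
    (hgh : Quot.mk (RConjRel A) g = Quot.mk (RConjRel A) h) : f g = f h ∨ f g = (f h)⁻¹ := by
  -- `{f g, (f g)⁻¹}` is an invariant of the ℝ-class of `g`.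
  have hinv : ∀ a b : G, RConjRel A a b →
      ({f a, (f a)⁻¹} : Set K) = {f b, (f b)⁻¹} := by
    rintro a b ⟨α, hα, rfl | rfl⟩
    · rw [hf α hα]
    · rw [hf α hα, map_inv, inv_inv, Set.pair_comm]
  have hset := congrArg (Quot.lift (fun a => ({f a, (f a)⁻¹} : Set K)) hinv) hgh
  have hmem : f g ∈ ({f h, (f h)⁻¹} : Set K) := by
    rw [← show ({f g, (f g)⁻¹} : Set K) = {f h, (f h)⁻¹} from hset]
    simp
  simpa using hmem

end CpRtimesCm

/-- Let `p` be a prime and `m ≥ 3` an integer with `m ∣ p - 1`, and let `G = C_p ⋊ C_m`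
be a semidirect product with faithful action (given by an injective homomorphism
`C_m → Aut(C_p)`).  Then `𝒩_G ≥ φ(m)/2 - 1`; in particular `𝒩_G > 0` if `m = 5` or
`m ≥ 7`. -/
theorem example_Cp_rtimes_Cm (p m : ℕ) (hp : p.Prime) (hm : 3 ≤ m) (hdvd : m ∣ p - 1)
    (N K : Type*) [Group N] [Group K] [IsCyclic N] [IsCyclic K]
    (hN : Nat.card N = p) (hK : Nat.card K = m)
    (φ : K →* MulAut N) (hφ : Function.Injective φ) :
    numQClasses (N ⋊[φ] K) ⊤ + (Nat.totient m / 2 - 1) ≤ numRClasses (N ⋊[φ] K) ⊤ ∧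
    ((m = 5 ∨ 7 ≤ m) → numQClasses (N ⋊[φ] K) ⊤ < numRClasses (N ⋊[φ] K) ⊤) := by
  classical
  have hp2 := hp.two_le
  have hpm : Nat.Coprime p m := by
    have hle := Nat.le_of_dvd (by omega) hdvd
    exact Nat.coprime_of_lt_prime (by omega) (by omega) hp
  have : Finite N := Nat.finite_of_card_ne_zero (by omega)
  have : Finite K := Nat.finite_of_card_ne_zero (by omega)
  have : Finite (N ⋊[φ] K) := Finite.of_equiv _ SemidirectProduct.equivProd.symm
  have := Fintype.ofFinite K
  rw [Nat.card_eq_fintype_card] at hK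
  let gens : Finset K := Finset.univ.filter fun k => orderOf k = m
  have hgens : gens.card = Nat.totient m := IsCyclic.card_orderOf_eq_totient hK.symm.dvd
  let F : K → Quot (RConjRel (⊤ : Subgroup (MulAut (N ⋊[φ] K)))) :=
    fun k => Quot.mk _ (SemidirectProduct.inr k)
  have hF : ∀ k l, F k = F l → k = l ∨ k = l⁻¹ := fun k l h => by
    simpa using CpRtimesCm.eq_or_eq_inv_of_mk_eq ⊤ SemidirectProduct.rightHom
      (fun α _ g => CpRtimesCm.right_mulAut_apply hpm hN
        (by rw [Nat.card_eq_fintype_card, hK]) φ hφ α g) h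
  have htwo : gens.card ≤ 2 * (gens.image F).card := by
    refine Finset.card_le_mul_card_image _ _ fun b hb => ?_
    obtain ⟨l, -, rfl⟩ := Finset.mem_image.mp hb
    refine (Finset.card_le_card (t := {l, l⁻¹}) fun k hk => ?_).trans Finset.card_le_two
    simpa using hF k l (Finset.mem_filter.mp hk).2
  have hpos : 0 < Nat.totient m := Nat.totient_pos.mpr (by omega)
  have heven : Even (Nat.totient m) := Nat.totient_even (by omega)
  obtain ⟨k₀, hk₀⟩ : gens.Nonempty := Finset.card_pos.mp (by omega)
  have htop : ∀ k ∈ gens, Subgroup.zpowers k = ⊤ := fun k hk => by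
    apply Subgroup.eq_top_of_card_eq
    rw [Nat.card_zpowers, (Finset.mem_filter.mp hk).2, Nat.card_eq_fintype_card, hK]
  have hconst : ∀ x ∈ gens.image F, CpRtimesCm.classMap ⊤ x = CpRtimesCm.classMap ⊤ (F k₀) := by
    intro x hx
    obtain ⟨k, hk, rfl⟩ := Finset.mem_image.mp hx
    refine Quot.sound ⟨1, Subgroup.mem_top _, ?_⟩
    refine (Subgroup.map_id _).trans ?_
    simp only [id_eq, ← MonoidHom.map_zpowers, htop k hk, htop k₀ hk₀]
  have hmain := CpRtimesCm.card_add_card_le_of_const _ (CpRtimesCm.classMap_surjective ⊤)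
    (gens.image F) _ hconst
  unfold numQClasses numRClasses
  obtain ⟨r, hr⟩ := heven
  refine ⟨by omega, fun h => ?_⟩
  have h4 := CpRtimesCm.four_le_totient h
  omega
end

section
/- Let p and m be primes with m ≥ 3 and m dividing p − 1, and let G be a semidirect product C_p ⋊ C_m of a cyclic group of order p by a cyclic group of order m acting faithfully. Then 𝒩_G = φ(m)/2 − 1 = (m − 1)/2 − 1. -/
/-- A surjective complete invariant with values in `β` identifies the quotient with `β`. -/
lemma card_quot_of_invariant {α β : Type*} {r : α → α → Prop} (f : α → β)
    (hf : Function.Surjective f) (h : ∀ a b, r a b ↔ f a = f b) :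
    Nat.card (Quot r) = Nat.card β := by
  refine Nat.card_congr (Equiv.ofBijective (Quot.lift f fun a b hab => (h a b).1 hab) ⟨?_, ?_⟩)
  · rintro ⟨a⟩ ⟨b⟩ hab
    exact Quot.sound ((h a b).2 hab)
  · intro b
    obtain ⟨a, rfl⟩ := hf b
    exact ⟨Quot.mk _ a, rfl⟩

/-! ### Orbits of the automorphism group -/

section Automorphisms

variable {p m : ℕ} {N K : Type*} [Group N] [Group K] {φ : K →* MulAut N}

lemma mul_comm_of_isCyclic [IsCyclic N] (a b : N) : a * b = b * a :=
  let := IsCyclic.commGroup (α := N)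
  mul_comm a b

lemma exists_inl_eq {g : N ⋊[φ] K} (h : g.right = 1) : SemidirectProduct.inl g.left = g := by
  ext <;> simp [h]

lemma right_zpow (g : N ⋊[φ] K) (i : ℤ) : (g ^ i).right = g.right ^ i :=
  map_zpow (SemidirectProduct.rightHom : N ⋊[φ] K →* K) g i

/-- Automorphisms preserve `N`: the orders of `N` and `K` are coprime. -/
lemma right_aut_inl (hN : Nat.card N = p) (hK : Nat.card K = m) (hco : p.Coprime m)
    (α : MulAut (N ⋊[φ] K)) (n : N) : (α (SemidirectProduct.inl n)).right = 1 := by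
  have h1 : (α (SemidirectProduct.inl n)).right ^ p = 1 := by
    have : n ^ p = 1 := hN ▸ pow_card_eq_one'
    rw [← SemidirectProduct.rightHom_eq_right, ← map_pow, ← map_pow, ← map_pow, this]
    simp
  have h2 : (α (SemidirectProduct.inl n)).right ^ m = 1 := hK ▸ pow_card_eq_one'
  rw [← orderOf_eq_one_iff]
  exact Nat.eq_one_of_dvd_coprimes hco (orderOf_dvd_of_pow_eq_one h1) (orderOf_dvd_of_pow_eq_one h2)

/-- A nontrivial element of `K` acts on `N` without nontrivial fixed points. -/
lemma eq_one_of_fixed [Fact p.Prime] (hN : Nat.card N = p) (hφ : Function.Injective φ)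
    {k : K} (hk : k ≠ 1) {x : N} (hx : φ k x = x) : x = 1 := by
  by_contra hx1
  apply hk
  apply hφ
  ext y
  obtain ⟨j, rfl⟩ := Subgroup.mem_zpowers_iff.1 (mem_zpowers_of_prime_card hN hx1 (g' := y))
  simp [hx]

variable [IsCyclic N]

/-- As `N` is commutative, conjugation on `N` by any `g` is `φ` of the `K`-component of `g`. -/
lemma conj_inl (g : N ⋊[φ] K) (n : N) :
    g * SemidirectProduct.inl n * g⁻¹ = SemidirectProduct.inl (φ g.right n) := by
  ext
  · simp only [SemidirectProduct.mul_left, SemidirectProduct.mul_right,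
      SemidirectProduct.inv_left, SemidirectProduct.left_inl, SemidirectProduct.right_inl,
      mul_one, map_inv, MulAut.apply_inv_self]
    rw [mul_comm_of_isCyclic g.left, mul_inv_cancel_right]
  · simp

lemma right_aut_apply (hN : Nat.card N = p) (hK : Nat.card K = m) (hco : p.Coprime m)
    (hφ : Function.Injective φ) (α : MulAut (N ⋊[φ] K)) (g : N ⋊[φ] K) :
    (α g).right = g.right := by
  apply hφ
  ext x
  obtain ⟨j, hj⟩ := MonoidHom.map_cyclic (φ g.right).toMonoidHom
  replace hj : ∀ y, φ g.right y = y ^ j := hj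
  -- `y` is the preimage of `x` under the automorphism that `α` induces on `N`
  set y := (α⁻¹ (SemidirectProduct.inl x)).left
  have hy : SemidirectProduct.inl y = α⁻¹ (SemidirectProduct.inl x) :=
    exists_inl_eq (right_aut_inl hN hK hco _ x)
  have hy' : α (SemidirectProduct.inl y) = SemidirectProduct.inl x := by
    rw [hy, MulAut.apply_inv_self]
  have h := congrArg α (conj_inl g y)
  rw [map_mul, map_mul, map_inv, hy', conj_inl, hj, map_zpow, map_zpow, hy', ← map_zpow,
    SemidirectProduct.inl_inj] at h
  rw [h, hj]

/-- The automorphism group of a group of prime order is transitive on nontrivial elements. -/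
lemma exists_aut_of_ne_one [Fact p.Prime] (hN : Nat.card N = p) {a b : N} (ha : a ≠ 1)
    (hb : b ≠ 1) : ∃ f : MulAut N, f a = b := by
  let := IsCyclic.commGroup (α := N)
  have : Finite N := Nat.finite_of_card_ne_zero (hN ▸ (Fact.out : p.Prime).ne_zero)
  obtain ⟨j, hj⟩ := Subgroup.mem_zpowers_iff.1 (mem_zpowers_of_prime_card hN ha (g' := b))
  have hinj : Function.Injective (zpowGroupHom j : N →* N) := by
    rw [injective_iff_map_eq_one]
    intro x hx
    by_contra hx1
    -- a nontrivial `x` with `x ^ j = 1` generates `N`, so that `b = a ^ j = 1`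
    obtain ⟨i, rfl⟩ := Subgroup.mem_zpowers_iff.1 (mem_zpowers_of_prime_card hN hx1 (g' := a))
    apply hb
    rw [← hj, ← zpow_mul, mul_comm, zpow_mul]
    simp only [zpowGroupHom_apply] at hx
    rw [hx, one_zpow]
  exact ⟨MulEquiv.ofBijective _ ⟨hinj, Finite.surjective_of_injective hinj⟩, hj⟩

lemma exists_aut_of_right_eq [Fact p.Prime] (hN : Nat.card N = p) (hφ : Function.Injective φ)
    {g h : N ⋊[φ] K} (hg : g ≠ 1) (hh : h ≠ 1) (hgh : g.right = h.right) :
    ∃ α : MulAut (N ⋊[φ] K), α h = g := by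
  have : Finite N := Nat.finite_of_card_ne_zero (hN ▸ (Fact.out : p.Prime).ne_zero)
  by_cases hr : h.right = 1
  · have hg' : g.left ≠ 1 := fun H => hg (by ext <;> simp [H, hgh, hr])
    have hh' : h.left ≠ 1 := fun H => hh (by ext <;> simp [H, hr])
    obtain ⟨f, hf⟩ := exists_aut_of_ne_one hN hh' hg'
    -- `f` commutes with the action of `K` because every endomorphism of `N` is a power map
    refine ⟨SemidirectProduct.congr f (MulEquiv.refl K) fun k => ?_, ?_⟩
    · ext x
      obtain ⟨j, hj⟩ := MonoidHom.map_cyclic (φ k).toMonoidHom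
      replace hj : ∀ y, φ k y = y ^ j := hj
      simp [hj]
    · ext
      · exact hf
      · exact hgh.symm
  · -- `x ↦ x * φ k x⁻¹` is injective as `k` has no nontrivial fixed points, hence surjective;
    -- conjugation by `x` multiplies the `N`-component by this value
    have hinj : Function.Injective fun x : N => x * φ h.right x⁻¹ := by
      intro x y hxy
      simp only [map_inv, mul_inv_eq_iff_eq_mul] at hxy
      have : φ h.right (y⁻¹ * x) = y⁻¹ * x := by
        rw [map_mul, map_inv]
        conv_rhs => rw [hxy]
        rw [mul_assoc, inv_mul_cancel_left]
      exact (inv_mul_eq_one.1 (eq_one_of_fixed hN hφ hr this)).symm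
    obtain ⟨x, hx⟩ := Finite.surjective_of_injective hinj (g.left * h.left⁻¹)
    refine ⟨MulAut.conj (SemidirectProduct.inl x), ?_⟩
    rw [MulAut.conj_apply, ← map_inv]
    ext
    · simp only [SemidirectProduct.mul_left, SemidirectProduct.mul_right,
        SemidirectProduct.left_inl, SemidirectProduct.right_inl, one_mul, map_one,
        MulAut.one_apply]
      rw [mul_assoc, mul_comm_of_isCyclic h.left, ← mul_assoc]
      simp only at hx
      rw [hx, inv_mul_cancel_right]
    · simp [hgh]

/-- The cyclic subgroup generated by an element outside `N` meets `N` trivially, so an element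
of it is determined by its `K`-component. -/
lemma zpow_eq_self_of_right [Fact p.Prime] (hN : Nat.card N = p) (hφ : Function.Injective φ)
    {g : N ⋊[φ] K} (hg : g.right ≠ 1) {i : ℤ} (hi : (g ^ i).right = g.right) : g ^ i = g := by
  have hr : (g ^ i * g⁻¹).right = 1 := by simp [hi]
  have h1 : SemidirectProduct.inl (g ^ i * g⁻¹).left = g ^ i * g⁻¹ := exists_inl_eq hr
  have h2 := conj_inl g (g ^ i * g⁻¹).left
  rw [h1, ← zpow_neg_one g, ← zpow_add, ← zpow_one_add, ← zpow_add,
    show 1 + (i + -1) + -1 = i + -1 by ring, zpow_add, zpow_neg_one] at h2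
  have h3 := eq_one_of_fixed hN hφ hg (SemidirectProduct.inl_injective (h2.symm.trans h1.symm))
  rw [h3, map_one] at h1
  exact (mul_inv_eq_one.1 h1.symm)

end Automorphisms

/-! ### Counting classes -/

section Counting

variable {p m : ℕ} {N K : Type*} [Group N] [Group K] {φ : K →* MulAut N}

open Classical in
/-- Counts the classes of a relation on `N ⋊ K` for which the identity is a class by itself and the
class of any other element is determined by the value of `c` on its `K`-component. -/
lemma card_quot_semidirect [Nontrivial N] {β : Type*} [Finite β]
    {r : N ⋊[φ] K → N ⋊[φ] K → Prop} (c : K → β) (hc : Function.Surjective c)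
    (hone : r 1 1) (hr : ∀ g h, r g h → (g = 1 ↔ h = 1) ∧ c g.right = c h.right)
    (hr' : ∀ g h, g ≠ 1 → h ≠ 1 → c g.right = c h.right → r g h) :
    Nat.card (Quot r) = Nat.card β + 1 := by
  rw [← Finite.card_option]
  refine card_quot_of_invariant
    (fun g : N ⋊[φ] K => if g = 1 then none else some (c g.right)) ?_ fun g h => ?_
  · rintro (_ | b)
    · exact ⟨1, by simp⟩
    · obtain ⟨k, rfl⟩ := hc b
      obtain ⟨n, hn⟩ := exists_ne (1 : N)
      have : (⟨n, k⟩ : N ⋊[φ] K) ≠ 1 := fun H => hn (congrArg SemidirectProduct.left H)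
      exact ⟨⟨n, k⟩, if_neg this⟩
  · by_cases hg : g = 1 <;> by_cases hh : h = 1
    · simp [hg, hh, hone]
    · simpa [hg, hh] using fun H => hh ((hr _ _ H).1.1 rfl)
    · simpa [hg, hh] using fun H => hg ((hr _ _ H).1.2 rfl)
    · simpa [hg, hh] using ⟨fun H => (hr _ _ H).2, hr' g h hg hh⟩

variable [IsCyclic N]

open Classical in
lemma numQClasses_eq [Fact p.Prime] [Fact m.Prime] (hN : Nat.card N = p) (hK : Nat.card K = m)
    (hco : p.Coprime m) (hφ : Function.Injective φ) : numQClasses (N ⋊[φ] K) ⊤ = 3 := by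
  have : Finite N := Nat.finite_of_card_ne_zero (hN ▸ (Fact.out : p.Prime).ne_zero)
  have : Finite K := Nat.finite_of_card_ne_zero (hK ▸ (Fact.out : m.Prime).ne_zero)
  have : Nontrivial N :=
    Finite.one_lt_card_iff_nontrivial.1 (hN ▸ (Fact.out : p.Prime).one_lt)
  have : Nontrivial K :=
    Finite.one_lt_card_iff_nontrivial.1 (hK ▸ (Fact.out : m.Prime).one_lt)
  rw [numQClasses, card_quot_semidirect (fun k : K => decide (k = 1))]
  · simp
  · rintro (_ | _)
    · obtain ⟨k, hk⟩ := exists_ne (1 : K)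
      exact ⟨k, by simpa using hk⟩
    · exact ⟨1, by simp⟩
  · exact ⟨1, trivial, by simp⟩
  · rintro g h ⟨α, -, H⟩
    rw [MonoidHom.map_zpowers] at H
    change Subgroup.zpowers (α h) = Subgroup.zpowers g at H
    have hr := right_aut_apply hN hK hco hφ α h
    obtain ⟨i, hi⟩ := Subgroup.mem_zpowers_iff.1 (H ▸ Subgroup.mem_zpowers (α h))
    obtain ⟨j, hj⟩ := Subgroup.mem_zpowers_iff.1 (H ▸ Subgroup.mem_zpowers g)
    refine ⟨⟨?_, ?_⟩, ?_⟩
    · rintro rfl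
      simpa using hi.symm
    · rintro rfl
      simpa using hj.symm
    · rw [decide_eq_decide, ← hr]
      constructor
      · intro h1
        rw [← hi, right_zpow, h1, one_zpow]
      · intro h1
        rw [← hj, right_zpow, h1, one_zpow]
  · intro g h hg hh hgh
    rw [decide_eq_decide] at hgh
    by_cases hg1 : g.right = 1
    · obtain ⟨α, hα⟩ := exists_aut_of_right_eq hN hφ hg hh (hg1.trans (hgh.1 hg1).symm)
      refine ⟨α, trivial, ?_⟩
      rw [MonoidHom.map_zpowers, ← hα]
      rfl
    · have hh1 : h.right ≠ 1 := fun H => hg1 (hgh.2 H)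
      -- a power `g ^ j` has the `K`-component of `h`, and generates the same subgroup as `g`
      obtain ⟨j, hj⟩ := Subgroup.mem_zpowers_iff.1
        (mem_zpowers_of_prime_card hK hg1 (g' := h.right))
      obtain ⟨i, hi⟩ := Subgroup.mem_zpowers_iff.1
        (mem_zpowers_of_prime_card hK hh1 (g' := g.right))
      rw [← right_zpow] at hj
      have hgj : g ^ j ≠ 1 := fun H => hh1 (by rw [← hj, H, SemidirectProduct.one_right])
      obtain ⟨α, hα⟩ := exists_aut_of_right_eq hN hφ hgj hh hj
      have hgji : (g ^ j) ^ i = g := by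
        rw [← zpow_mul]
        apply zpow_eq_self_of_right hN hφ hg1
        rw [zpow_mul, right_zpow, hj, hi]
      refine ⟨α, trivial, ?_⟩
      rw [MonoidHom.map_zpowers]
      change Subgroup.zpowers (α h) = Subgroup.zpowers g
      rw [hα]
      apply le_antisymm
      · exact Subgroup.zpowers_le.2 (Subgroup.zpow_mem_zpowers g j)
      · exact Subgroup.zpowers_le.2 (Subgroup.mem_zpowers_iff.2 ⟨i, hgji⟩)

/-- A complete invariant of the elements of `K ≅ ℤ/m` up to inversion: the absolute value of the
representative in `(-m/2, m/2]`. -/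
lemma exists_invariant_up_to_inv [IsCyclic K] [NeZero m] (hK : Nat.card K = m) :
    ∃ c : K → Fin (m / 2 + 1), Function.Surjective c ∧
      ∀ k l, c k = c l ↔ k = l ∨ k = l⁻¹ := by
  subst hK
  let e := (zmodCyclicMulEquiv (G := K) inferInstance).symm
  refine ⟨fun k => ⟨(e k).toAdd.valMinAbs.natAbs,
    Nat.lt_succ_of_le (ZMod.natAbs_valMinAbs_le _)⟩, ?_, ?_⟩
  · rintro ⟨a, ha⟩
    refine ⟨e.symm (Multiplicative.ofAdd (a : ZMod (Nat.card K))), Fin.ext ?_⟩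
    simp [ZMod.valMinAbs_natCast_of_le_half (Nat.le_of_lt_succ ha)]
  · intro k l
    rw [Fin.mk.injEq, ZMod.natAbs_valMinAbs_eq_natAbs_valMinAbs, ← toAdd_inv, ← map_inv,
      Multiplicative.toAdd.injective.eq_iff, Multiplicative.toAdd.injective.eq_iff,
      e.injective.eq_iff, e.injective.eq_iff]

lemma numRClasses_eq [Fact p.Prime] [Fact m.Prime] [IsCyclic K] (hN : Nat.card N = p)
    (hK : Nat.card K = m) (hco : p.Coprime m) (hφ : Function.Injective φ) :
    numRClasses (N ⋊[φ] K) ⊤ = m / 2 + 2 := by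
  have : Finite N := Nat.finite_of_card_ne_zero (hN ▸ (Fact.out : p.Prime).ne_zero)
  have : Nontrivial N :=
    Finite.one_lt_card_iff_nontrivial.1 (hN ▸ (Fact.out : p.Prime).one_lt)
  have : NeZero m := ⟨(Fact.out : m.Prime).ne_zero⟩
  obtain ⟨c, hc, hcc⟩ := exists_invariant_up_to_inv hK
  rw [numRClasses, card_quot_semidirect c hc]
  · simp
  · exact ⟨1, trivial, by simp⟩
  · rintro g h ⟨α, -, rfl | rfl⟩
    · exact ⟨by simp, by rw [right_aut_apply hN hK hco hφ]⟩
    · refine ⟨by simp, (hcc _ _).2 (Or.inr ?_)⟩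
      rw [right_aut_apply hN hK hco hφ, SemidirectProduct.inv_right]
  · intro g h hg hh hgh
    rcases (hcc _ _).1 hgh with H | H
    · obtain ⟨α, hα⟩ := exists_aut_of_right_eq hN hφ hg hh H
      exact ⟨α, trivial, Or.inl hα⟩
    · obtain ⟨α, hα⟩ := exists_aut_of_right_eq hN hφ hg (inv_ne_one.2 hh) H
      exact ⟨α, trivial, Or.inr hα⟩

end Counting

/-- Let `p` and `m` be primes with `m ≥ 3` and `m ∣ p - 1`, and let `G = C_p ⋊ C_m` be a
semidirect product with faithful action.  Then `𝒩_G = φ(m)/2 - 1 = (m-1)/2 - 1`. -/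
theorem example_Cp_rtimes_Cm_prime (p m : ℕ) (hp : p.Prime) (hmp : m.Prime) (hm : 3 ≤ m)
    (hdvd : m ∣ p - 1)
    (N K : Type*) [Group N] [Group K] [IsCyclic N] [IsCyclic K]
    (hN : Nat.card N = p) (hK : Nat.card K = m)
    (φ : K →* MulAut N) (hφ : Function.Injective φ) :
    numRClasses (N ⋊[φ] K) ⊤ = numQClasses (N ⋊[φ] K) ⊤ + (Nat.totient m / 2 - 1) ∧
    Nat.totient m / 2 - 1 = (m - 1) / 2 - 1 := by
  have := Fact.mk hp
  have := Fact.mk hmp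
  have hco : p.Coprime m := by
    rw [Nat.coprime_primes hp hmp]
    have := Nat.le_of_dvd (by have := hp.two_le; omega) hdvd
    have := hp.two_le
    omega
  have hodd : m % 2 = 1 := hmp.eq_two_or_odd.resolve_left (by omega)
  rw [numRClasses_eq hN hK hco hφ, numQClasses_eq hN hK hco hφ, Nat.totient_prime hmp]
  omega
end

section
/- Let p be a prime and m ≥ 3 an integer with m dividing p − 1, let G be a semidirect product C_p ⋊ C_m of a cyclic group of order p by a cyclic group of order m acting faithfully, and let H be the unique Sylow p-subgroup of G (the image of C_p). Then every automorphism α of G induces the identity on G/H; that is, α(g)·g⁻¹ ∈ H for every g ∈ G. -/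
/-!
Conjugation by `g` on the cyclic normal subgroup `N` is raising to a power `a`, and this power
depends only on (and, by faithfulness, determines) the class `g.right` of `g` in the quotient.
An automorphism `α` preserves `N`, because `|N| = p` and `|K| = m` are coprime, so it carries
conjugation by `g` on `N` to conjugation by `α g` on `N`. Power maps commute with `α`, so both
conjugations are the same power map, whence `(α g).right = g.right`.
-/

/-- Since a cyclic `N` is commutative, conjugation on `N` by `g : N ⋊[φ] K` is the action of `g.right`. -/
lemma conj_inl_eq {N K : Type*} [Group N] [Group K] [IsCyclic N] (φ : K →* MulAut N)
    (g : N ⋊[φ] K) (n : N) :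
    g * SemidirectProduct.inl n = SemidirectProduct.inl (φ g.right n) * g := by
  ext
  · have := IsCyclic.isMulCommutative (α := N)
    simpa using mul_comm' g.left (φ g.right n)
  · simp

/-- The subgroup `N` is invariant under automorphisms when `|N|` and `|K|` are coprime: every
element of `K` killed by both orders is trivial. -/
lemma right_map_inl_eq_one {N K : Type*} [Group N] [Group K] (φ : K →* MulAut N)
    (hco : (Nat.card N).Coprime (Nat.card K)) (α : MulAut (N ⋊[φ] K)) (n : N) :
    (α (SemidirectProduct.inl n)).right = 1 := by
  let f : N →* K :=
    SemidirectProduct.rightHom.comp (α.toMonoidHom.comp SemidirectProduct.inl)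
  have h1 : f n ^ Nat.card N = 1 := by rw [← map_pow, pow_card_eq_one', map_one]
  have h2 : f n ^ Nat.card K = 1 := pow_card_eq_one'
  have h3 : orderOf (f n) = 1 :=
    Nat.eq_one_of_dvd_coprimes hco (orderOf_dvd_of_pow_eq_one h1) (orderOf_dvd_of_pow_eq_one h2)
  exact orderOf_eq_one_iff.mp h3

/-- Let `p` be a prime and `m ≥ 3` with `m ∣ p - 1`, let `G = C_p ⋊ C_m` be a semidirect
product with faithful action, and let `H` be the image of `C_p` in `G` (the unique Sylow
`p`-subgroup).  Then every automorphism of `G` induces the identity on `G/H`; that is,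
`α(g)·g⁻¹ ∈ H` for every `g ∈ G`. -/
theorem aut_trivial_on_quotient (p m : ℕ) (hp : p.Prime) (hm : 3 ≤ m) (hdvd : m ∣ p - 1)
    (N K : Type*) [Group N] [Group K] [IsCyclic N] [IsCyclic K]
    (hN : Nat.card N = p) (hK : Nat.card K = m)
    (φ : K →* MulAut N) (hφ : Function.Injective φ) :
    ∀ (α : MulAut (N ⋊[φ] K)) (g : N ⋊[φ] K),
      α g * g⁻¹ ∈ (SemidirectProduct.inl : N →* N ⋊[φ] K).range := by
  intro α g
  have hco : (Nat.card N).Coprime (Nat.card K) := by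
    rw [hN, hK]
    refine (Nat.Prime.coprime_iff_not_dvd hp).mpr fun h => ?_
    have h1 := Nat.le_of_dvd (by have := hp.two_le; omega) (h.trans hdvd)
    have := hp.two_le
    omega
  suffices h : (α g).right = g.right by
    rw [SemidirectProduct.range_inl_eq_ker_rightHom, MonoidHom.mem_ker]
    simp [h]
  apply hφ
  ext n
  obtain ⟨a, ha⟩ := MonoidHom.map_cyclic (φ g.right).toMonoidHom
  obtain ⟨b, hb⟩ := MonoidHom.map_cyclic (φ (α g).right).toMonoidHom
  replace ha : ∀ x, φ g.right x = x ^ a := ha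
  replace hb : ∀ x, φ (α g).right x = x ^ b := hb
  have hα : α (SemidirectProduct.inl n)
      = SemidirectProduct.inl (α (SemidirectProduct.inl n)).left := by
    ext
    · simp
    · simpa using right_map_inl_eq_one φ hco α n
  -- Conjugation by `α g` sends `α n` to its `a`-th power by transport along `α`, and to its
  -- `b`-th power because `α n` lies in `N`.
  have e1 : α g * α (SemidirectProduct.inl n) = α (SemidirectProduct.inl n) ^ a * α g := by
    rw [← map_mul, conj_inl_eq, ha, map_mul, map_zpow, map_zpow]
  have e2 : α g * α (SemidirectProduct.inl n) = α (SemidirectProduct.inl n) ^ b * α g := by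
    rw [hα, conj_inl_eq, hb, map_zpow]
  have e3 := mul_right_cancel (e1.symm.trans e2)
  rw [← map_zpow, ← map_zpow, ← map_zpow, ← map_zpow] at e3
  rw [ha, hb]
  exact (SemidirectProduct.inl_injective (α.injective e3)).symm
end

section
/- If G is a symmetric group on a finite set, or an alternating group on a finite set, then 𝒩_G = 0; that is, the number of ℝ-Aut(G)-conjugacy classes of elements of G equals the number of ℚ-Aut(G)-conjugacy classes of elements of G. -/
theorem QConjRel.of_rConjRel {G : Type*} [Group G] {A : Subgroup (MulAut G)} {g h : G}
    (H : RConjRel A g h) : QConjRel A g h := by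
  obtain ⟨α, hα, H | H⟩ := H
  · refine ⟨α, hα, ?_⟩
    rw [MonoidHom.map_zpowers]
    exact congrArg Subgroup.zpowers H
  · refine ⟨α, hα, ?_⟩
    rw [← Subgroup.zpowers_inv, MonoidHom.map_zpowers]
    exact congrArg Subgroup.zpowers H

/-- Under `hG` the two relations are equal: if `α` maps `⟨h⟩` onto `⟨g⟩`, then `α h` and `g`
generate the same subgroup, and `hG` corrects `α` to an automorphism sending `h` to `g`. -/
theorem numRClasses_eq_numQClasses {G : Type*} [Group G]
    (hG : ∀ a b : G, Subgroup.zpowers a = Subgroup.zpowers b → ∃ β : MulAut G, β a = b) :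
    numRClasses G ⊤ = numQClasses G ⊤ := by
  have hrel : RConjRel (⊤ : Subgroup (MulAut G)) = QConjRel ⊤ := by
    ext g h
    refine ⟨QConjRel.of_rConjRel, ?_⟩
    rintro ⟨α, -, hα⟩
    rw [MonoidHom.map_zpowers] at hα
    obtain ⟨β, hβ⟩ := hG (α h) g hα
    exact ⟨β * α, Subgroup.mem_top _, Or.inl hβ⟩
  rw [numRClasses, numQClasses, hrel]

theorem sameCycle_of_zpowers_eq {X : Type*} {σ τ : Equiv.Perm X}
    (h : Subgroup.zpowers σ = Subgroup.zpowers τ) {x y : X} (hs : σ.SameCycle x y) :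
    τ.SameCycle x y := by
  obtain ⟨i, rfl⟩ := hs
  have hi : σ ^ i ∈ Subgroup.zpowers τ := h ▸ Subgroup.zpow_mem_zpowers σ i
  obtain ⟨j, hj⟩ := Subgroup.mem_zpowers_iff.1 hi
  exact ⟨j, by rw [hj]⟩

/-- The cycle type lists the sizes of the nontrivial orbits. -/
theorem cycleType_eq_map_card_orbits {X : Type*} [Fintype X] [DecidableEq X]
    (σ : Equiv.Perm X) :
    σ.cycleType = (σ.support.image fun x => (σ.cycleOf x).support).val.map Finset.card := by
  have himg : (σ.support.image fun x => (σ.cycleOf x).support) =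
      σ.cycleFactorsFinset.image Equiv.Perm.support := by
    ext s
    simp only [Finset.mem_image]
    constructor
    · rintro ⟨x, hx, rfl⟩
      exact ⟨_, Equiv.Perm.cycleOf_mem_cycleFactorsFinset_iff.2 hx, rfl⟩
    · rintro ⟨c, hc, rfl⟩
      obtain ⟨x, hx⟩ := (Equiv.Perm.mem_cycleFactorsFinset_iff.1 hc).1.nonempty_support
      refine ⟨x, Equiv.Perm.mem_cycleFactorsFinset_support_le hc hx, ?_⟩
      rw [← Equiv.Perm.cycle_is_cycleOf hx hc]
  -- Distinct cycles of `σ` are disjoint and nontrivial, so they have distinct supports.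
  have hinj : Set.InjOn Equiv.Perm.support (σ.cycleFactorsFinset : Set (Equiv.Perm X)) := by
    intro c hc d hd hcd
    obtain ⟨x, hx⟩ := (Equiv.Perm.mem_cycleFactorsFinset_iff.1 hc).1.nonempty_support
    rw [Equiv.Perm.cycle_is_cycleOf hx hc, Equiv.Perm.cycle_is_cycleOf (hcd ▸ hx) hd]
  rw [himg, Finset.image_val_of_injOn hinj, Multiset.map_map, Equiv.Perm.cycleType_def]

theorem cycleType_eq_of_zpowers_eq {X : Type*} [Fintype X] [DecidableEq X]
    {σ τ : Equiv.Perm X} (h : Subgroup.zpowers σ = Subgroup.zpowers τ) :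
    σ.cycleType = τ.cycleType := by
  have hsame (x y : X) : σ.SameCycle x y ↔ τ.SameCycle x y :=
    ⟨sameCycle_of_zpowers_eq h, sameCycle_of_zpowers_eq h.symm⟩
  have hsupp : σ.support = τ.support := by
    ext x
    have key {ρ π : Equiv.Perm X} (hρπ : Subgroup.zpowers ρ = Subgroup.zpowers π)
        (hx : π x = x) : ρ x = x := by
      have hs : π.SameCycle x (ρ x) := sameCycle_of_zpowers_eq hρπ ⟨1, by simp⟩
      exact (hs.eq_of_left hx).symm
    rw [Equiv.Perm.mem_support, Equiv.Perm.mem_support]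
    exact not_congr ⟨key h.symm, key h⟩
  rw [cycleType_eq_map_card_orbits, cycleType_eq_map_card_orbits, hsupp]
  congr 2
  refine Finset.image_congr fun x hx => ?_
  ext y
  have hx' : x ∈ τ.support := hx
  rw [Equiv.Perm.mem_support_cycleOf_iff, Equiv.Perm.mem_support_cycleOf_iff, hsame, hsupp]

theorem exists_conj_eq_of_zpowers_eq {X : Type*} [Fintype X] [DecidableEq X]
    {σ τ : Equiv.Perm X} (h : Subgroup.zpowers σ = Subgroup.zpowers τ) :
    ∃ c : Equiv.Perm X, c * σ * c⁻¹ = τ :=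
  isConj_iff.1 (Equiv.Perm.isConj_iff_cycleType_eq.2 (cycleType_eq_of_zpowers_eq h))

/-- If `G` is a symmetric group or an alternating group on a finite set, then the number
of ℝ-Aut(G)-conjugacy classes of elements of `G` equals the number of
ℚ-Aut(G)-conjugacy classes, i.e. 𝒩_G = 0. -/
theorem example_symmetric_alternating (X : Type*) [Fintype X] [DecidableEq X] :
    numRClasses (Equiv.Perm X) ⊤ = numQClasses (Equiv.Perm X) ⊤ ∧
    numRClasses (alternatingGroup X) ⊤ = numQClasses (alternatingGroup X) ⊤ := by
  refine ⟨numRClasses_eq_numQClasses fun a b h => ?_,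
    numRClasses_eq_numQClasses fun a b h => ?_⟩
  · obtain ⟨c, hc⟩ := exists_conj_eq_of_zpowers_eq h
    exact ⟨MulAut.conj c, hc⟩
  · have h' : Subgroup.zpowers (a : Equiv.Perm X) = Subgroup.zpowers (b : Equiv.Perm X) := by
      simpa only [MonoidHom.map_zpowers, Subgroup.coe_subtype] using
        congrArg (Subgroup.map (alternatingGroup X).subtype) h
    obtain ⟨c, hc⟩ := exists_conj_eq_of_zpowers_eq h'
    exact ⟨MulAut.conjNormal c, Subtype.ext ((MulAut.conjNormal_apply c a).trans hc)⟩
end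

section
/- Let n ≥ 2 be an integer and q a prime power. Then the projective special linear group PSL_n(q) contains an element of order (q^n − 1)/((q − 1)·gcd(q − 1, n)). -/
/-!
The element comes from a Singer cycle. Let `K` be the extension of `F` of degree `n`, let `g`
generate the cyclic group `Kˣ` of order `q ^ n - 1`, and put `a = g ^ (q - 1)`. The norm of `a` is
`N(g) ^ (q - 1) = 1`, so multiplication by `a` is an `F`-linear map of determinant `1` and defines
an element of `SL_n(F)`. Its `m`-th power is scalar iff `a ^ m` lies in `F`, that is, iff
`a ^ (m (q - 1)) = g ^ ((q - 1)² m) = 1` (`mem_range_iff_pow_card_sub_one`).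
This says `q ^ n - 1 ∣ (q - 1)² m`, equivalently `(q ^ n - 1) / ((q - 1) gcd (q - 1, n)) ∣ m`,
because `(q ^ n - 1) / (q - 1) = 1 + q + ⋯ + q ^ (n - 1)` is congruent to `n` modulo `q - 1`
(`dvd_sq_mul_iff`).
-/

/-- A nonzero element of a finite extension `K` of `F` lies in `F` iff it is killed by `q - 1`:
such an element is fixed by Frobenius, which generates the Galois group. -/
theorem mem_range_iff_pow_card_sub_one (F K : Type*) [Field F] [Fintype F] [Field K] [Finite K]
    [Algebra F K] (x : K) (hx : x ≠ 0) :
    (∃ r : F, algebraMap F K r = x) ↔ x ^ (Fintype.card F - 1) = 1 := by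
  constructor
  · rintro ⟨r, rfl⟩
    have hr : r ≠ 0 := by
      rintro rfl
      simp at hx
    rw [← map_pow, FiniteField.pow_card_sub_one_eq_one r hr, map_one]
  · intro h
    have hfix : x ^ Fintype.card F = x := by
      rw [← Nat.sub_add_cancel (Fintype.card_pos (α := F)), pow_succ, h, one_mul]
    have hiter : ∀ i : ℕ, x ^ (Fintype.card F ^ i) = x := by
      intro i
      induction i with
      | zero => simp
      | succ k ih => rw [pow_succ, pow_mul, ih, hfix]
    have hb : x ∈ (⊥ : IntermediateField F K) := by
      rw [IsGalois.mem_bot_iff_fixed]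
      intro s
      obtain ⟨p, hp⟩ := CharP.exists F
      have : Fact p.Prime := ⟨CharP.char_is_prime F p⟩
      obtain ⟨i, hi⟩ := FiniteField.exists_forall_apply_eq_pow F p K s
      have := hi x
      rw [this, Nat.card_eq_fintype_card, hiter]
    exact IntermediateField.mem_bot.1 hb

/-- The order of an element of `Kˣ` modulo `Fˣ`, as arithmetic of exponents. -/
theorem dvd_sq_mul_iff (q n m : ℕ) (hq : 2 ≤ q) :
    q ^ n - 1 ∣ (q - 1) * (m * (q - 1)) ↔ (q ^ n - 1) / ((q - 1) * Nat.gcd (q - 1) n) ∣ m := by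
  set N := ∑ k ∈ Finset.range n, q ^ k with hN
  have hpos : 0 < q - 1 := by omega
  have hmul : q ^ n - 1 = (q - 1) * N := by
    rw [hN, Nat.geomSum_eq hq, Nat.mul_div_cancel' (Nat.sub_one_dvd_pow_sub_one q n)]
  have hmod : N ≡ n [MOD q - 1] := by
    have h1 : q ≡ 1 [MOD q - 1] := Nat.modEq_sub (by omega)
    have h2 : N ≡ ∑ k ∈ Finset.range n, 1 [MOD q - 1] := by
      refine Nat.ModEq.sum fun k _ => ?_
      simpa using h1.pow k
    simpa using h2
  have hg : Nat.gcd (q - 1) n = Nat.gcd N (q - 1) := by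
    rw [Nat.gcd_comm, ← hmod.gcd_eq]
  rw [hg, hmul, Nat.mul_dvd_mul_iff_left hpos, Nat.mul_div_mul_left _ _ hpos]
  have hd : 0 < Nat.gcd N (q - 1) := Nat.gcd_pos_of_pos_right _ hpos
  have hc := Nat.coprime_div_gcd_div_gcd hd
  conv_lhs => rw [← Nat.mul_div_cancel' (Nat.gcd_dvd_left N (q - 1))]
  conv_lhs => rhs; rw [← Nat.mul_div_cancel' (Nat.gcd_dvd_right N (q - 1))]
  rw [mul_left_comm, Nat.mul_dvd_mul_iff_left hd, hc.dvd_mul_right]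

/-- Let `n ≥ 2` and let `q` be a prime power (the cardinality of the finite field `F`).
Then `PSL_n(q)` contains an element of order `(q^n - 1)/((q - 1)·gcd(q - 1, n))`. -/
theorem PSL_element_of_order (n q : ℕ) (hn : 2 ≤ n) (F : Type*) [Field F] [Fintype F]
    (hq : Fintype.card F = q) :
    ∃ x : Matrix.ProjectiveSpecialLinearGroup (Fin n) F,
      orderOf x = (q ^ n - 1) / ((q - 1) * Nat.gcd (q - 1) n) := by
  obtain ⟨p, hp⟩ := CharP.exists F
  have : Fact p.Prime := ⟨CharP.char_is_prime F p⟩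
  have : NeZero n := ⟨by omega⟩
  have hq2 : 2 ≤ q := hq ▸ Fintype.one_lt_card
  let K := FiniteField.Extension F p n
  have hfin : Module.finrank F K = n := FiniteField.finrank_extension F p n
  have hcard : Nat.card K = q ^ n := by
    rw [FiniteField.natCard_extension, Nat.card_eq_fintype_card, hq]
  let b : Module.Basis (Fin n) F K := Module.finBasisOfFinrankEq F K hfin
  obtain ⟨g, hg⟩ := IsCyclic.exists_generator (α := Kˣ)
  have hog : orderOf g = q ^ n - 1 := by
    rw [orderOf_eq_card_of_forall_mem_zpowers hg, Nat.card_units, hcard]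
  let a : K := ((g ^ (q - 1) : Kˣ) : K)
  have ha : a ≠ 0 := Units.ne_zero _
  have hdet : (Algebra.leftMulMatrix b a).det = 1 := by
    rw [← Algebra.norm_eq_matrix_det]
    have h0 : Algebra.norm F (g : K) ≠ 0 := Algebra.norm_ne_zero_iff.2 g.ne_zero
    simp only [a, Units.val_pow_eq_pow_val, map_pow]
    rw [← hq]
    exact FiniteField.pow_card_sub_one_eq_one _ h0
  let A : Matrix.SpecialLinearGroup (Fin n) F := ⟨Algebra.leftMulMatrix b a, hdet⟩
  -- the coset of `A ^ m` in `PSL` is trivial iff `a ^ m` is in the base field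
  have hcent (m : ℕ) : A ^ m ∈ Subgroup.center (Matrix.SpecialLinearGroup (Fin n) F) ↔
      ∃ r : F, algebraMap F K r = a ^ m := by
    have hcoe : ((A ^ m : Matrix.SpecialLinearGroup (Fin n) F) : Matrix (Fin n) (Fin n) F) =
        Algebra.leftMulMatrix b (a ^ m) := by
      rw [Matrix.SpecialLinearGroup.coe_pow, map_pow]
    have hsc (r : F) : Matrix.scalar (Fin n) r =
        Algebra.leftMulMatrix b (algebraMap F K r) := by
      rw [AlgHom.commutes]
      rfl
    rw [Matrix.SpecialLinearGroup.mem_center_iff, hcoe]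
    constructor
    · rintro ⟨r, -, h⟩
      rw [hsc] at h
      exact ⟨r, Algebra.leftMulMatrix_injective b h⟩
    · rintro ⟨r, h⟩
      have hs : Matrix.scalar (Fin n) r = Algebra.leftMulMatrix b (a ^ m) := by rw [hsc, h]
      refine ⟨r, ?_, hs⟩
      -- a scalar matrix in `SL` has `r ^ n = 1`, its determinant
      have hd := (A ^ m).det_coe
      rw [hcoe, ← hs] at hd
      simpa using hd
  refine ⟨(QuotientGroup.mk A : _ ⧸ Subgroup.center (Matrix.SpecialLinearGroup (Fin n) F)), ?_⟩
  refine Nat.dvd_right_iff_eq.1 fun m => ?_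
  rw [← dvd_sq_mul_iff q n m hq2, orderOf_dvd_iff_pow_eq_one, ← hog, orderOf_dvd_iff_pow_eq_one]
  have h1 := (hcent m).trans (mem_range_iff_pow_card_sub_one F K _ (pow_ne_zero m ha))
  rw [← QuotientGroup.eq_one_iff, QuotientGroup.mk_pow, hq] at h1
  refine h1.trans ?_
  rw [← Units.val_inj, pow_mul, pow_mul]
  simp [a]
end

section
/- Let K be a field of characteristic 0, let G be a finite group, and let A be a subgroup of Aut(G) containing Inn(G). Then the number of A-orbits on the set of isomorphism classes of irreducible finite-dimensional K-linear representations of G equals the number of K-A-conjugacy classes of elements of G. -/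
/-!
Let `X` be the set of `K`-`A`-conjugacy classes. The characters of the irreducible `K`-representations,
summed over `A`-orbits, form a basis of the space of functions `X → K`; comparing dimensions gives
the theorem.

The arithmetic input is `trace_pow_eq`: if `σ` is an automorphism of the algebraic closure of `K`
acting on roots of unity by `ζ ↦ ζ ^ a`, then `σ (tr (ρ g)) = tr (ρ (g ^ a))`. Applied to a
representation over `K` it shows that characters are constant on `K`-conjugacy classes
(`character_pow`), so the orbit characters are functions on `X`. They are linearly independent
(`linearIndependent_orbitFunction`) by the orthogonality relations and Schur's lemma, whence there
are at most `|X|` orbits.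

Conversely, let `F` be a function on `X` orthogonal to every irreducible character, and consider
the central element `z = ∑ F [g] g` of `K[G]`. After extending scalars, `G` acts on each eigenspace
of `z`; the trace of `z` there is `∑ F [g] tr g`, and by the same arithmetic input and the Galois
invariance of `F` it is fixed by every `σ`. So the eigenvalues of `z` lie in `K`, and `z` acts on each
irreducible `K`-representation as a scalar of `K` (`exists_sum_eq_smul`), which vanishes because its
trace does. Since `K[G]` has trivial Jacobson radical, `z = 0` (`eq_zero_of_forall_irr`). Hence
`F ↦ (O ↦ ∑ F [g] χ_O g)` is injective (`characterPairing_injective`), and there are at least `|X|`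
orbits.
-/

/-- An irreducible finite-dimensional `K`-linear representation of `G`, realized on a
standard space `Fin dim → K` (every finite-dimensional representation is isomorphic to
one of this form, so these realize all isomorphism classes). -/
structure IrrRepOn (K G : Type*) [Field K] [Group G] where
  /-- the dimension -/
  dim : ℕ
  /-- the representation -/
  ρ : Representation K G (Fin dim → K)
  /-- the representation space is nonzero -/
  nontrivial : ∃ v : Fin dim → K, v ≠ 0
  /-- the only invariant subspaces are `⊥` and `⊤` -/
  irred : ∀ p : Submodule K (Fin dim → K), (∀ (g : G), ∀ v ∈ p, ρ g v ∈ p) → p = ⊥ ∨ p = ⊤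

/-- Two irreducible representations `V, W` are related if `W` is isomorphic to the
precomposition of `V` with some `α ∈ A`; the classes of this relation are exactly the
`A`-orbits on the set of isomorphism classes of irreducible representations. -/
def repRel {K G : Type*} [Field K] [Group G] (A : Subgroup (MulAut G))
    (V W : IrrRepOn K G) : Prop :=
  ∃ α ∈ A, ∃ e : (Fin V.dim → K) ≃ₗ[K] (Fin W.dim → K),
    ∀ (g : G) (v : Fin V.dim → K), e (V.ρ (α g) v) = W.ρ g (e v)

/-- Two elements `g, h` of `G` are `K`-`A`-conjugate if they have the same order `n` and
`g` lies in the `A`-orbit of `h^a` for some `a` whose class mod `n` lies in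
`Gal(K(μ_n)/K) ≤ (ℤ/n)ˣ`; the Galois condition is expressed by the existence of a
`K`-automorphism of an algebraic closure of `K` acting as `ζ ↦ ζ^a` on the `n`-th roots
of unity. -/
def KConjRel (K : Type*) [Field K] {G : Type*} [Group G] (A : Subgroup (MulAut G))
    (g h : G) : Prop :=
  orderOf g = orderOf h ∧
  ∃ a : ℕ, (∃ σ : AlgebraicClosure K ≃ₐ[K] AlgebraicClosure K,
      ∀ ζ : AlgebraicClosure K, ζ ^ orderOf h = 1 → σ ζ = ζ ^ a) ∧
    ∃ α ∈ A, α (h ^ a) = g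

/-! ### Traces and Galois automorphisms -/

/-- If `M ^ n = 1`, then `M` is diagonalizable with `n`-th roots of unity as eigenvalues, so a field
endomorphism raising these roots to the power `a` carries the trace of `M` to that of `M ^ a`. -/
theorem trace_pow_eq {L W : Type*} [Field L] [IsAlgClosed L] [CharZero L] [AddCommGroup W]
    [Module L W] [FiniteDimensional L W] (M : Module.End L W) {n : ℕ} (hn : n ≠ 0) (hM : M ^ n = 1)
    (σ : L →+* L) (a : ℕ) (hσ : ∀ ζ : L, ζ ^ n = 1 → σ ζ = ζ ^ a) :
    LinearMap.trace L W (M ^ a) = σ (LinearMap.trace L W M) := by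
  classical
  -- `M` is annihilated by the separable polynomial `X ^ n - 1`.
  have hss : M.IsSemisimple := by
    refine Module.End.isSemisimple_of_squarefree_aeval_eq_zero
      (p := Polynomial.X ^ n - 1) ?_ ?_
    · exact ((Polynomial.X_pow_sub_one_separable_iff).2 (by exact_mod_cast hn)).squarefree
    · simp [hM]
  have hint : DirectSum.IsInternal fun μ => M.eigenspace μ := by
    rw [DirectSum.isInternal_submodule_iff_iSupIndep_and_iSup_eq_top]
    refine ⟨M.eigenspaces_iSupIndep, ?_⟩
    rw [← Module.End.iSup_maxGenEigenspace_eq_top M]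
    exact iSup_congr fun μ => (hss.isFinitelySemisimple.maxGenEigenspace_eq_eigenspace μ).symm
  have hfin : {μ | M.eigenspace μ ≠ ⊥}.Finite :=
    WellFoundedGT.finite_ne_bot_of_iSupIndep M.eigenspaces_iSupIndep
  have hpow : ∀ (k : ℕ) (μ : L), ∀ w ∈ M.eigenspace μ, (M ^ k) w = μ ^ k • w := by
    intro k μ w hw
    rw [Module.End.mem_eigenspace_iff] at hw
    induction k with
    | zero => simp
    | succ k ih => rw [pow_succ, Module.End.mul_apply, hw, map_smul, ih, smul_smul, pow_succ']
  have hmaps : ∀ (k : ℕ) (μ : L), Set.MapsTo (M ^ k) (M.eigenspace μ) (M.eigenspace μ) := by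
    intro k μ w hw
    rw [SetLike.mem_coe, hpow k μ w hw]
    exact Submodule.smul_mem _ _ hw
  have htr : ∀ k : ℕ, LinearMap.trace L W (M ^ k) =
      ∑ μ ∈ hfin.toFinset, μ ^ k * (Module.finrank L (M.eigenspace μ) : L) := by
    intro k
    rw [LinearMap.trace_eq_sum_trace_restrict' hint hfin (hmaps k)]
    refine Finset.sum_congr rfl fun μ _ => ?_
    have : (M ^ k).restrict (hmaps k μ) = μ ^ k • LinearMap.id := by
      exact LinearMap.ext fun w => Subtype.ext (hpow k μ w w.2)
    rw [this, map_smul, LinearMap.trace_id, smul_eq_mul]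
  have h1 := htr 1
  rw [pow_one] at h1
  rw [htr a, h1, map_sum]
  refine Finset.sum_congr rfl fun μ hμ => ?_
  rw [pow_one, map_mul, map_natCast]
  congr 1
  refine (hσ μ ?_).symm
  obtain ⟨w, hw, hw0⟩ := (Submodule.ne_bot_iff _).1 (hfin.mem_toFinset.1 hμ)
  have := hpow n μ w hw
  rw [hM, Module.End.one_apply] at this
  have h2 : (μ ^ n - 1) • w = 0 := by rw [sub_smul, one_smul, ← this, sub_self]
  exact sub_eq_zero.1 ((smul_eq_zero.1 h2).resolve_right hw0)

/-- The extension of scalars from `K` to `L` of a representation on `Fin d → K`, realized on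
`Fin d → L` by mapping the entries of the matrices of `ρ` to `L`. -/
noncomputable def extendScalars {K G : Type*} [Field K] [Group G] (L : Type*) [Field L] [Algebra K L]
    {d : ℕ} (ρ : Representation K G (Fin d → K)) : Representation L G (Fin d → L) :=
  (((Matrix.toLinAlgEquiv' (R := L) (n := Fin d)).toRingEquiv.toRingHom.comp
    ((algebraMap K L).mapMatrix.comp
      (LinearMap.toMatrixAlgEquiv' (R := K) (n := Fin d)).toRingEquiv.toRingHom)) :
      Module.End K (Fin d → K) →* Module.End L (Fin d → L)).comp ρ

theorem extendScalars_apply {K G : Type*} [Field K] [Group G] (L : Type*) [Field L] [Algebra K L]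
    {d : ℕ} (ρ : Representation K G (Fin d → K)) (g : G) :
    extendScalars L ρ g = Matrix.toLin' ((LinearMap.toMatrix' (ρ g)).map (algebraMap K L)) := rfl

theorem trace_extendScalars {K G : Type*} [Field K] [Group G] (L : Type*) [Field L] [Algebra K L]
    {d : ℕ} (ρ : Representation K G (Fin d → K)) (g : G) :
    LinearMap.trace L _ (extendScalars L ρ g) = algebraMap K L (ρ.character g) := by
  rw [extendScalars_apply, Matrix.trace_toLin'_eq, Representation.character,
    LinearMap.trace_eq_matrix_trace K (Pi.basisFun K (Fin d)), LinearMap.toMatrix_eq_toMatrix',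
    Matrix.trace, Matrix.trace, map_sum]
  rfl

/-- A character with values in `K` is constant on `K`-conjugacy classes, because its values are fixed
by every `K`-automorphism of the algebraic closure. -/
theorem character_pow {K G : Type*} [Field K] [CharZero K] [Group G] [Finite G]
    {d : ℕ} (ρ : Representation K G (Fin d → K)) (g : G) (a : ℕ)
    (σ : AlgebraicClosure K ≃ₐ[K] AlgebraicClosure K)
    (hσ : ∀ ζ : AlgebraicClosure K, ζ ^ orderOf g = 1 → σ ζ = ζ ^ a) :
    ρ.character (g ^ a) = ρ.character g := by
  have h := trace_pow_eq (extendScalars (AlgebraicClosure K) ρ g) (orderOf_pos g).ne'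
    (by rw [← map_pow, pow_orderOf_eq_one, map_one]) (σ : AlgebraicClosure K →+* AlgebraicClosure K)
    a hσ
  rw [← map_pow, trace_extendScalars, trace_extendScalars] at h
  simpa using h

/-- If `f : G → K` is invariant under the Galois power maps `g ↦ g ^ a` and `∑ g, f g • ρ g` is a
scalar `c` on a representation over the algebraic closure, then `c` lies in `K`: taking traces,
`c * dim = ∑ f g * tr (ρ g)`, and applying `σ` only reindexes this sum along `g ↦ g ^ a`. The
hypothesis `hf` encodes `Gal(K(μ_N)/K)`, for `N = |G|`, by automorphisms of the algebraic closure
of `K`. -/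
theorem scalar_mem_range {K G W : Type*} [Field K] [CharZero K] [Group G] [Fintype G]
    [AddCommGroup W] [Module (AlgebraicClosure K) W] [FiniteDimensional (AlgebraicClosure K) W]
    [Nontrivial W] (ρ : Representation (AlgebraicClosure K) G W) (f : G → K)
    (hf : ∀ (a : ℕ) (σ : AlgebraicClosure K ≃ₐ[K] AlgebraicClosure K),
      (Nat.card G).Coprime a → (∀ ζ : AlgebraicClosure K, ζ ^ Nat.card G = 1 → σ ζ = ζ ^ a) →
      ∀ g, f (g ^ a) = f g)
    (c : AlgebraicClosure K)
    (hc : ∑ g, algebraMap K (AlgebraicClosure K) (f g) • ρ g = c • 1) :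
    ∃ x : K, algebraMap K _ x = c := by
  refine (InfiniteGalois.mem_range_algebraMap_iff_fixed c).2 fun σ => ?_
  have hN : Nat.card G ≠ 0 := Nat.card_pos.ne'
  have : NeZero (Nat.card G) := ⟨hN⟩
  have : NeZero ((Nat.card G : ℕ) : AlgebraicClosure K) := ⟨by exact_mod_cast hN⟩
  obtain ⟨ζ, hζ⟩ := HasEnoughRootsOfUnity.exists_primitiveRoot (AlgebraicClosure K) (Nat.card G)
  have hσζ : IsPrimitiveRoot (σ ζ) (Nat.card G) := hζ.map_of_injective σ.injective
  obtain ⟨a, -, ha⟩ := hζ.eq_pow_of_pow_eq_one hσζ.pow_eq_one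
  have hcop : (Nat.card G).Coprime a := by
    rw [← ha, hζ.pow_iff_coprime (Nat.pos_of_ne_zero hN)] at hσζ
    exact hσζ.symm
  have hσ : ∀ ξ : AlgebraicClosure K, ξ ^ Nat.card G = 1 → σ ξ = ξ ^ a := by
    intro ξ hξ
    obtain ⟨i, -, rfl⟩ := hζ.eq_pow_of_pow_eq_one hξ
    rw [map_pow, ← ha, ← pow_mul, ← pow_mul, mul_comm]
  have htr : ∑ g, algebraMap K (AlgebraicClosure K) (f g) * LinearMap.trace _ W (ρ g) =
      c * (Module.finrank (AlgebraicClosure K) W : AlgebraicClosure K) := by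
    have := congrArg (LinearMap.trace (AlgebraicClosure K) W) hc
    simpa [map_sum] using this
  have htr' := congrArg σ htr
  rw [map_sum, map_mul, map_natCast] at htr'
  have hre : ∑ g, σ (algebraMap K (AlgebraicClosure K) (f g) * LinearMap.trace _ W (ρ g)) =
      ∑ g, algebraMap K (AlgebraicClosure K) (f g) * LinearMap.trace _ W (ρ g) := by
    refine Fintype.sum_equiv (powCoprime hcop) _ _ fun g => ?_
    rw [powCoprime_apply, map_mul, AlgEquiv.commutes, hf a σ hcop hσ, map_pow]
    congr 1
    exact (trace_pow_eq (ρ g) hN (by rw [← map_pow, pow_card_eq_one', map_one])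
      (σ : AlgebraicClosure K →+* AlgebraicClosure K) a hσ).symm
  rw [hre, htr] at htr'
  have hd : (Module.finrank (AlgebraicClosure K) W : AlgebraicClosure K) ≠ 0 := by
    exact_mod_cast (Module.finrank_pos).ne'
  exact (mul_right_cancel₀ hd htr').symm

/-! ### Class functions acting on irreducible representations -/

theorem commute_sum_of_conj_invariant {R G W : Type*} [Field R] [Group G] [Fintype G]
    [AddCommGroup W] [Module R W] (ρ : Representation R G W) (f : G → R)
    (hf : ∀ h g, f (h * g * h⁻¹) = f g) (h : G) : Commute (∑ g, f g • ρ g) (ρ h) := by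
  rw [Commute, SemiconjBy, Finset.sum_mul, Finset.mul_sum]
  symm
  refine Fintype.sum_equiv (MulAut.conj h).toEquiv _ _ fun g => ?_
  simp only [MulEquiv.toEquiv_eq_coe, EquivLike.coe_coe, MulAut.conj_apply]
  rw [hf, mul_smul_comm, smul_mul_assoc, ← map_mul, ← map_mul]
  simp

/-- An element `∑ g, f g • g` of the group algebra whose coefficients are constant on conjugacy
classes and on Galois power classes acts on every irreducible representation over `K` by a scalar
of `K`, although such a representation need not be absolutely irreducible. -/
theorem exists_sum_eq_smul {K G : Type*} [Field K] [CharZero K] [Group G] [Fintype G]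
    (V : IrrRepOn K G) (f : G → K) (hconj : ∀ h g, f (h * g * h⁻¹) = f g)
    (hf : ∀ (a : ℕ) (σ : AlgebraicClosure K ≃ₐ[K] AlgebraicClosure K),
      (Nat.card G).Coprime a → (∀ ζ : AlgebraicClosure K, ζ ^ Nat.card G = 1 → σ ζ = ζ ^ a) →
      ∀ g, f (g ^ a) = f g) :
    ∃ x : K, ∑ g, f g • V.ρ g = x • (1 : Module.End K (Fin V.dim → K)) := by
  obtain ⟨v, hv⟩ := V.nontrivial
  obtain ⟨i, -⟩ := Function.ne_iff.1 hv
  have : Nonempty (Fin V.dim) := ⟨i⟩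
  set L := AlgebraicClosure K
  set ρL := extendScalars L V.ρ with hρL
  set Z : Module.End K (Fin V.dim → K) := ∑ g, f g • V.ρ g with hZ
  set ZL : Module.End L (Fin V.dim → L) := ∑ g, algebraMap K L (f g) • ρL g with hZL
  have hZZL : ZL = Matrix.toLin' ((LinearMap.toMatrix' Z).map (algebraMap K L)) := by
    have h1 : (LinearMap.toMatrix' Z).map (algebraMap K L) =
        ∑ g, algebraMap K L (f g) • (LinearMap.toMatrix' (V.ρ g)).map (algebraMap K L) := by
      ext i j
      simp [hZ, map_sum, Matrix.sum_apply]
      exact Finset.sum_congr rfl fun g _ => (Algebra.smul_def _ _).symm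
    rw [h1, hZL, map_sum]
    refine Finset.sum_congr rfl fun g _ => ?_
    rw [map_smul, hρL, extendScalars_apply]
  have hcomm : ∀ h, Commute ZL (ρL h) :=
    commute_sum_of_conj_invariant ρL (fun g => algebraMap K L (f g)) fun h g => by rw [hconj]
  -- The group acts on an eigenspace of `ZL`, so `scalar_mem_range` makes the eigenvalue rational.
  obtain ⟨c, hc⟩ := Module.End.exists_eigenvalue ZL
  have hinv : ∀ g, ∀ w ∈ ZL.eigenspace c, ρL g w ∈ ZL.eigenspace c := by
    intro g w hw
    rw [Module.End.mem_eigenspace_iff] at hw ⊢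
    rw [← Module.End.mul_apply, (hcomm g).eq, Module.End.mul_apply, hw, map_smul]
  let ρW : Representation L G (ZL.eigenspace c) :=
    { toFun := fun g => (ρL g).restrict (hinv g)
      map_one' := by
        refine LinearMap.ext fun w => Subtype.ext ?_
        change ρL 1 w = w
        rw [map_one]; rfl
      map_mul' := fun g h => by
        refine LinearMap.ext fun w => Subtype.ext ?_
        change ρL (g * h) w = ρL g (ρL h w)
        rw [map_mul]; rfl }
  have : Nontrivial (ZL.eigenspace c) := Submodule.nontrivial_iff_ne_bot.2 hc
  have hW : ∑ g, algebraMap K L (f g) • ρW g = c • 1 := by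
    refine LinearMap.ext fun w => Subtype.ext ?_
    have h2 : (∑ g, algebraMap K L (f g) • ρL g) (w : Fin V.dim → L) = c • (w : Fin V.dim → L) :=
      Module.End.mem_eigenspace_iff.1 w.2
    simp only [LinearMap.sum_apply, LinearMap.smul_apply, AddSubmonoidClass.coe_finsetSum,
      SetLike.val_smul, Module.End.one_apply] at h2 ⊢
    exact h2
  obtain ⟨x, hx⟩ := scalar_mem_range ρW f hf c hW
  refine ⟨x, ?_⟩
  have hxZ : Z.HasEigenvalue x := by
    rw [Module.End.hasEigenvalue_iff_isRoot_charpoly] at hc ⊢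
    rw [hZZL, Matrix.charpoly_toLin', Matrix.charpoly_map, ← hx, Polynomial.IsRoot,
      Polynomial.eval_map_algebraMap, Polynomial.aeval_algebraMap_apply,
      ← LinearMap.toMatrix_eq_toMatrix', LinearMap.charpoly_toMatrix] at hc
    simpa using hc
  -- The rational eigenspace is nonzero and invariant, so it is everything.
  have htop : Z.eigenspace x = ⊤ := by
    refine (V.irred (Z.eigenspace x) fun g w hw => ?_).resolve_left hxZ
    rw [Module.End.mem_eigenspace_iff] at hw ⊢
    rw [← Module.End.mul_apply, (commute_sum_of_conj_invariant V.ρ f hconj g).eq,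
      Module.End.mul_apply, ← hZ, hw, map_smul]
  refine LinearMap.ext fun w => ?_
  exact Module.End.mem_eigenspace_iff.1 (htop ▸ Submodule.mem_top : w ∈ Z.eigenspace x)

theorem sum_eq_zero_of_character {K G : Type*} [Field K] [CharZero K] [Group G] [Fintype G]
    (V : IrrRepOn K G) (f : G → K) (hconj : ∀ h g, f (h * g * h⁻¹) = f g)
    (hf : ∀ (a : ℕ) (σ : AlgebraicClosure K ≃ₐ[K] AlgebraicClosure K),
      (Nat.card G).Coprime a → (∀ ζ : AlgebraicClosure K, ζ ^ Nat.card G = 1 → σ ζ = ζ ^ a) →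
      ∀ g, f (g ^ a) = f g)
    (h0 : ∑ g, f g * V.ρ.character g = 0) : ∑ g, f g • V.ρ g = 0 := by
  obtain ⟨x, hx⟩ := exists_sum_eq_smul V f hconj hf
  obtain ⟨v, hv⟩ := V.nontrivial
  have : Nontrivial (Fin V.dim → K) := ⟨⟨v, 0, hv⟩⟩
  have htr := congrArg (LinearMap.trace K _) hx
  simp only [map_sum, map_smul, smul_eq_mul, LinearMap.trace_one] at htr
  change ∑ g, f g * V.ρ.character g = _ at htr
  rw [h0] at htr
  have hd : (Module.finrank K (Fin V.dim → K) : K) ≠ 0 := by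
    exact_mod_cast (Module.finrank_pos).ne'
  rw [hx, (mul_eq_zero.1 htr.symm).resolve_right hd, zero_smul]

/-- An element of the group algebra acting as zero on every irreducible representation vanishes:
it kills the simple module `K[G] ⧸ m` for each maximal left ideal `m`, so it lies in the Jacobson
radical, which is trivial by Maschke's theorem. -/
theorem eq_zero_of_forall_irr {K G : Type*} [Field K] [CharZero K] [Group G] [Fintype G]
    (f : G → K) (h : ∀ V : IrrRepOn K G, ∑ g, f g • V.ρ g = 0) : f = 0 := by
  have : NeZero (Nat.card G : K) := ⟨by exact_mod_cast Nat.card_pos.ne'⟩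
  set z : MonoidAlgebra K G := ∑ g, f g • MonoidAlgebra.of K G g with hz
  suffices hz0 : z = 0 by
    funext g
    classical
    have := congrArg (fun y : MonoidAlgebra K G => y.coeff g) hz0
    simpa [hz, Finsupp.single_apply] using this
  have hj : Ring.jacobson (MonoidAlgebra K G) = ⊥ := IsSemisimpleModule.jacobson_eq_bot _ _
  suffices z ∈ Ring.jacobson (MonoidAlgebra K G) by rwa [hj, Ideal.mem_bot] at this
  rw [Ring.jacobson, Module.jacobson, Submodule.mem_sInf]
  intro m hm
  have hs : IsSimpleModule (MonoidAlgebra K G) (MonoidAlgebra K G ⧸ m) :=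
    isSimpleModule_iff_isCoatom.2 hm
  have : Module.Finite K (MonoidAlgebra K G ⧸ m) := inferInstance
  let Q := MonoidAlgebra K G ⧸ m
  -- The simple quotient `Q`, transported to a standard space, is an `IrrRepOn`.
  let e : Q ≃ₗ[K] (Fin (Module.finrank K Q) → K) := (Module.finBasis K Q).equivFun
  let ρ : Representation K G (Fin (Module.finrank K Q) → K) :=
    ((e.conjRingEquiv : Module.End K Q →* _).comp
      ((Algebra.lsmul K K Q : MonoidAlgebra K G →ₐ[K] Module.End K Q) :
        MonoidAlgebra K G →* Module.End K Q)).comp (MonoidAlgebra.of K G)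
  have hρ : ∀ g v, ρ g v = e (MonoidAlgebra.of K G g • e.symm v) := fun g v => rfl
  let V : IrrRepOn K G :=
    { dim := Module.finrank K Q
      ρ := ρ
      nontrivial := by
        have : Nontrivial Q := IsSimpleModule.nontrivial (MonoidAlgebra K G) Q
        obtain ⟨q, hq⟩ := exists_ne (0 : Q)
        exact ⟨e q, by simpa using hq⟩
      irred := by
        intro p hp
        let p' : Submodule (MonoidAlgebra K G) Q :=
          { carrier := {q | e q ∈ p}
            add_mem' := fun {a b} ha hb => by
              simpa using p.add_mem ha hb
            zero_mem' := by simp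
            smul_mem' := fun r q hq => by
              change e (r • q) ∈ p
              induction r using MonoidAlgebra.induction_on with
              | of g => simpa [hρ] using hp g _ hq
              | add a b ha hb => rw [add_smul, map_add]; exact p.add_mem ha hb
              | smul c a ha => rw [smul_assoc, map_smul]; exact p.smul_mem c ha }
        have hmem : ∀ v, v ∈ p ↔ e.symm v ∈ p' := fun v => by
          change _ ↔ e (e.symm v) ∈ p
          rw [e.apply_symm_apply]
        rcases eq_bot_or_eq_top p' with h | h
        · left
          ext v
          rw [hmem, h]; simp
        · right
          ext v
          rw [hmem, h]; simp }
  -- Applying `z` to the class of `1` shows that `z` itself lies in `m`.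
  have hV := LinearMap.congr_fun (h V) (e (Submodule.Quotient.mk 1))
  have hV' : e (z • (Submodule.Quotient.mk 1 : Q)) = 0 := by
    rw [hz, Finset.sum_smul, map_sum]
    simp only [smul_assoc, map_smul]
    simpa [V, hρ, LinearMap.sum_apply] using hV
  rw [LinearEquiv.map_eq_zero_iff, ← Submodule.Quotient.mk_smul, Submodule.Quotient.mk_eq_zero,
    smul_eq_mul, mul_one] at hV'
  exact hV'

/-! ### Class functions on `K`-`A`-conjugacy classes -/

theorem kConjRel_aut {K G : Type*} [Field K] [Group G] (A : Subgroup (MulAut G)) {α : MulAut G}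
    (hα : α ∈ A) (g : G) : KConjRel K A (α g) g :=
  ⟨MulEquiv.orderOf_eq α g, 1, ⟨AlgEquiv.refl, fun ζ _ => by simp⟩, α, hα, by simp⟩

theorem kConjRel_pow {K G : Type*} [Field K] [Group G] (A : Subgroup (MulAut G)) {a : ℕ}
    (ha : (Nat.card G).Coprime a) (σ : AlgebraicClosure K ≃ₐ[K] AlgebraicClosure K)
    (hσ : ∀ ζ : AlgebraicClosure K, ζ ^ Nat.card G = 1 → σ ζ = ζ ^ a) (g : G) :
    KConjRel K A (g ^ a) g := by
  refine ⟨Nat.Coprime.orderOf_pow (ha.coprime_dvd_left (orderOf_dvd_natCard g)), a,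
    ⟨σ, fun ζ hζ => hσ ζ ?_⟩, 1, A.one_mem, rfl⟩
  obtain ⟨k, hk⟩ := orderOf_dvd_natCard g
  rw [hk, pow_mul, hζ, one_pow]

/-! ### Orbit characters and their linear independence -/

/-- The precomposition of a representation with an automorphism of the group. -/
def twist {K G V : Type*} [Field K] [Group G] [AddCommGroup V] [Module K V]
    (ρ : Representation K G V) (α : MulAut G) : Representation K G V :=
  ρ.comp (α : G →* G)

/-- The sum of the characters of the twists of `V` by all elements of `A`: a positive multiple of
the sum of the characters in the `A`-orbit of `V`. -/
noncomputable def orbitCharacter {K G : Type*} [Field K] [Group G] (A : Subgroup (MulAut G))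
    [Fintype A] (V : IrrRepOn K G) (g : G) : K :=
  ∑ α : A, V.ρ.character ((α : MulAut G) g)

theorem orbitCharacter_eq {K G : Type*} [Field K] [CharZero K] [Group G] [Finite G]
    (A : Subgroup (MulAut G)) [Fintype A] (V : IrrRepOn K G) {g h : G} (hgh : KConjRel K A g h) :
    orbitCharacter A V g = orbitCharacter A V h := by
  obtain ⟨-, a, ⟨σ, hσ⟩, β, hβ, rfl⟩ := hgh
  refine Fintype.sum_equiv (Equiv.mulRight (⟨β, hβ⟩ : A)) _ _ fun α => ?_
  have h1 : (α : MulAut G) (β (h ^ a)) = (((α : MulAut G) * β) h) ^ a := by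
    rw [MulAut.mul_apply, map_pow, map_pow]
  rw [h1, character_pow V.ρ _ a σ]
  · rfl
  · rwa [MulEquiv.orderOf_eq ((α : MulAut G) * β) h]

/-- Schur's lemma, for a twist of `V`. -/
theorem repRel_of_intertwiningMap_ne_zero {K G : Type*} [Field K] [Group G]
    {A : Subgroup (MulAut G)} (V W : IrrRepOn K G) {α : MulAut G} (hα : α ∈ A)
    (φ : Representation.IntertwiningMap W.ρ (twist V.ρ α)) (hφ : φ ≠ 0) : repRel A V W := by
  have hφ' : ∀ g w, φ.toLinearMap (W.ρ g w) = V.ρ (α g) (φ.toLinearMap w) := fun g w =>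
    LinearMap.congr_fun (φ.isIntertwining' g) w
  have hne : φ.toLinearMap ≠ 0 := fun h => hφ (Representation.IntertwiningMap.ext h)
  have hbij : Function.Bijective φ.toLinearMap := by
    constructor
    · rw [← LinearMap.ker_eq_bot]
      refine (W.irred _ fun g v hv => ?_).resolve_right fun h => hne (LinearMap.ker_eq_top.1 h)
      rw [LinearMap.mem_ker] at hv ⊢
      rw [hφ', hv, map_zero]
    · rw [← LinearMap.range_eq_top]
      refine (V.irred _ ?_).resolve_left fun h => hne (LinearMap.range_eq_bot.1 h)
      rintro g _ ⟨w, rfl⟩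
      exact ⟨W.ρ (α.symm g) w, by rw [hφ', MulEquiv.apply_symm_apply]⟩
  let e := LinearEquiv.ofBijective φ.toLinearMap hbij
  refine ⟨α, hα, e.symm, fun g v => ?_⟩
  rw [LinearEquiv.symm_apply_eq]
  change _ = φ.toLinearMap _
  rw [hφ']
  change _ = V.ρ (α g) (e (e.symm v))
  rw [e.apply_symm_apply]

/-- The first orthogonality relation over a field that need not be algebraically closed: the sum is
`|G|` times the dimension of a space of intertwining maps. -/
theorem sum_character_twist {K G : Type*} [Field K] [CharZero K] [Group G] [Fintype G]
    (V W : IrrRepOn K G) (α : MulAut G) :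
    ∑ g, V.ρ.character (α g) * W.ρ.character g⁻¹ =
      Nat.card G * (Module.finrank K (Representation.IntertwiningMap W.ρ (twist V.ρ α)) : K) := by
  have hG : (Nat.card G : K) ≠ 0 := by exact_mod_cast Nat.card_pos.ne'
  let _ : Invertible (Nat.card G : K) := invertibleOfNonzero hG
  rw [← Representation.card_inv_mul_sum_char_mul_char_eq_finrank, mul_inv_cancel_left₀ hG]
  rfl

theorem sum_orbitCharacter {K G : Type*} [Field K] [CharZero K] [Group G] [Fintype G]
    (A : Subgroup (MulAut G)) [Fintype A] (V W : IrrRepOn K G) :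
    ∑ g, orbitCharacter A V g * W.ρ.character g⁻¹ =
      ((Nat.card G * ∑ α : A, Module.finrank K
        (Representation.IntertwiningMap W.ρ (twist V.ρ (α : MulAut G))) : ℕ) : K) := by
  simp_rw [orbitCharacter, Finset.sum_mul]
  rw [Finset.sum_comm]
  simp_rw [sum_character_twist]
  push_cast
  rw [Finset.mul_sum]

theorem sum_orbitCharacter_eq_zero {K G : Type*} [Field K] [CharZero K] [Group G] [Fintype G]
    (A : Subgroup (MulAut G)) [Fintype A] (V W : IrrRepOn K G) (h : ¬ repRel A V W) :
    ∑ g, orbitCharacter A V g * W.ρ.character g⁻¹ = 0 := by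
  rw [sum_orbitCharacter, Nat.cast_eq_zero, Finset.sum_eq_zero, mul_zero]
  intro α _
  have : Subsingleton (Representation.IntertwiningMap W.ρ (twist V.ρ (α : MulAut G))) :=
    subsingleton_of_forall_eq 0 fun φ => by
      by_contra hφ
      exact h (repRel_of_intertwiningMap_ne_zero V W α.2 φ hφ)
  exact Module.finrank_zero_of_subsingleton

/-- The term of `α = 1` counts `End_G V`, which is nonzero; in characteristic zero the sum over
`A` cannot cancel. -/
theorem sum_orbitCharacter_self_ne_zero {K G : Type*} [Field K] [CharZero K] [Group G] [Fintype G]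
    (A : Subgroup (MulAut G)) [Fintype A] (V : IrrRepOn K G) :
    ∑ g, orbitCharacter A V g * V.ρ.character g⁻¹ ≠ 0 := by
  rw [sum_orbitCharacter, Nat.cast_ne_zero]
  refine mul_ne_zero Nat.card_pos.ne' fun h => ?_
  have h1 := (Finset.sum_eq_zero_iff.1 h) 1 (Finset.mem_univ _)
  change Module.finrank K (Representation.IntertwiningMap V.ρ V.ρ) = 0 at h1
  have : Subsingleton (Representation.IntertwiningMap V.ρ V.ρ) :=
    Module.finrank_zero_iff.1 h1
  obtain ⟨v, hv⟩ := V.nontrivial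
  have h2 := Subsingleton.elim (Representation.IntertwiningMap.id V.ρ) 0
  exact hv (congrArg (fun φ : Representation.IntertwiningMap V.ρ V.ρ => φ v) h2)

/-- The function on `K`-`A`-conjugacy classes given by the orbit character of a chosen
representative of the orbit `O`. -/
noncomputable def orbitFunction {K G : Type*} [Field K] [CharZero K] [Group G] [Finite G]
    (A : Subgroup (MulAut G)) [Fintype A] (O : Quot (repRel (K := K) A)) :
    Quot (KConjRel K A) → K :=
  Quot.lift (orbitCharacter A O.out) fun _ _ => orbitCharacter_eq A _

theorem linearIndependent_orbitFunction {K G : Type*} [Field K] [CharZero K] [Group G] [Finite G]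
    (A : Subgroup (MulAut G)) [Fintype A] :
    LinearIndependent K (orbitFunction (K := K) A) := by
  have := Fintype.ofFinite G
  -- `ψ O` pairs a class function with the character of a representative of `O`.
  let ψ : Quot (repRel (K := K) A) → Module.Dual K (Quot (KConjRel K A) → K) := fun O =>
    ∑ g : G, (O.out.ρ.character g⁻¹) • LinearMap.proj (Quot.mk _ g)
  have hψ : ∀ O P, ψ O (orbitFunction A P) =
      ∑ g, orbitCharacter A P.out g * O.out.ρ.character g⁻¹ := fun O P => by
    simp only [ψ, LinearMap.sum_apply, LinearMap.smul_apply, LinearMap.proj_apply, smul_eq_mul]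
    exact Finset.sum_congr rfl fun g _ => mul_comm _ _
  refine LinearIndependent.of_pairwise_dual_eq_zero_one _
    (fun O => (ψ O (orbitFunction A O))⁻¹ • ψ O) (fun O P hOP => ?_) fun O => ?_
  · beta_reduce
    rw [LinearMap.smul_apply, hψ O P, sum_orbitCharacter_eq_zero, smul_zero]
    intro h
    have := Quot.sound h
    rw [Quot.out_eq, Quot.out_eq] at this
    exact hOP this.symm
  · rw [LinearMap.smul_apply, smul_eq_mul, inv_mul_cancel₀]
    rw [hψ]
    exact sum_orbitCharacter_self_ne_zero A _

theorem character_of_repRel {K G : Type*} [Field K] [Group G] {V W : IrrRepOn K G}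
    {α : MulAut G} {e : (Fin V.dim → K) ≃ₗ[K] (Fin W.dim → K)}
    (he : ∀ (g : G) (v : Fin V.dim → K), e (V.ρ (α g) v) = W.ρ g (e v)) (g : G) :
    V.ρ.character (α g) = W.ρ.character g := by
  have : W.ρ g = e.conj (V.ρ (α g)) := by
    refine LinearMap.ext fun w => ?_
    rw [LinearEquiv.conj_apply_apply, he, e.apply_symm_apply]
  rw [Representation.character, Representation.character, this, LinearMap.trace_conj']

/-! ### Completeness of the orbit characters -/

/-- The map sending a function `F` on `K`-`A`-conjugacy classes to
`O ↦ ∑ g, F [g] * χ_O g`, where `χ_O` is the character of a chosen representative of the orbit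
`O`. -/
noncomputable def characterPairing {K G : Type*} [Field K] [Group G] [Fintype G]
    (A : Subgroup (MulAut G)) :
    (Quot (KConjRel K A) → K) →ₗ[K] (Quot (repRel (K := K) A) → K) :=
  LinearMap.pi fun O => ∑ g : G, (O.out.ρ.character g) • LinearMap.proj (Quot.mk _ g)

theorem characterPairing_apply_mk {K G : Type*} [Field K] [Group G] [Fintype G]
    (A : Subgroup (MulAut G)) (F : Quot (KConjRel K A) → K) (O : Quot (repRel (K := K) A)) :
    characterPairing A F O = ∑ g : G, F (Quot.mk _ g) * O.out.ρ.character g := by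
  simp [characterPairing, LinearMap.sum_apply, mul_comm]

theorem sum_character_of_repRel {K G : Type*} [Field K] [Group G] [Fintype G]
    (A : Subgroup (MulAut G)) (F : Quot (KConjRel K A) → K) {V W : IrrRepOn K G}
    (h : repRel A V W) :
    ∑ g : G, F (Quot.mk _ g) * V.ρ.character g = ∑ g : G, F (Quot.mk _ g) * W.ρ.character g := by
  obtain ⟨α, hα, e, he⟩ := h
  symm
  refine Fintype.sum_equiv α.toEquiv _ _ fun g => ?_
  change _ = F (Quot.mk _ (α g)) * V.ρ.character (α g)
  rw [character_of_repRel he, Quot.sound (kConjRel_aut A hα g)]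

/-- The orbit characters span: a class function orthogonal to all irreducible characters gives an
element of the group algebra acting on each irreducible representation by a scalar of trace zero,
hence by zero. -/
theorem characterPairing_injective {K G : Type*} [Field K] [CharZero K] [Group G] [Fintype G]
    (A : Subgroup (MulAut G)) (hA : MulAut.conj.range ≤ A) :
    Function.Injective (characterPairing (K := K) A) := by
  rw [injective_iff_map_eq_zero]
  intro F hF
  -- The pairing does not depend on the chosen representatives, as `F` is `A`-invariant.
  have hall : ∀ V : IrrRepOn K G, ∑ g : G, F (Quot.mk _ g) * V.ρ.character g = 0 := by
    intro V
    let s : Quot (repRel (K := K) A) → K :=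
      Quot.lift (fun V => ∑ g : G, F (Quot.mk _ g) * V.ρ.character g)
        fun _ _ => sum_character_of_repRel A F
    have h1 : s (Quot.mk _ V) = s (Quot.mk _ (Quot.mk (repRel A) V).out) := by
      rw [Quot.out_eq]
    change s (Quot.mk _ V) = 0
    rw [h1]
    change ∑ g : G, F (Quot.mk _ g) * (Quot.mk (repRel A) V).out.ρ.character g = 0
    rw [← characterPairing_apply_mk, hF, Pi.zero_apply]
  have h0 : (fun g : G => F (Quot.mk _ g)) = 0 :=
    eq_zero_of_forall_irr _ fun V => sum_eq_zero_of_character V _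
      (fun h g => congrArg F (Quot.sound (kConjRel_aut A (hA ⟨h, rfl⟩) g)))
      (fun a σ ha hσ g => congrArg F (Quot.sound (kConjRel_pow A ha σ hσ g))) (hall V)
  funext x
  obtain ⟨g, rfl⟩ := Quot.exists_rep x
  exact congrFun h0 g

/-- Let `K` be a field of characteristic 0, `G` a finite group, and `A ≤ Aut(G)` a
subgroup containing `Inn(G)`.  Then the number of `A`-orbits on the set of isomorphism
classes of irreducible finite-dimensional `K`-linear representations of `G` equals the
number of `K`-`A`-conjugacy classes of elements of `G`. -/
theorem card_irr_orbits_eq_card_KConjClasses (K : Type*) [Field K] [CharZero K]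
    (G : Type*) [Group G] [Finite G]
    (A : Subgroup (MulAut G)) (hA : MulAut.conj.range ≤ A) :
    Nat.card (Quot (repRel (K := K) (G := G) A)) =
    Nat.card (Quot (KConjRel K (G := G) A)) := by
  have := Fintype.ofFinite G
  have : Finite (MulAut G) :=
    Finite.of_injective (fun α : MulAut G => (α : G → G)) DFunLike.coe_injective
  have := Fintype.ofFinite A
  have := Fintype.ofFinite (Quot (KConjRel K (G := G) A))
  have hli := linearIndependent_orbitFunction (K := K) A
  have : Finite (Quot (repRel (K := K) (G := G) A)) := hli.finite
  have := Fintype.ofFinite (Quot (repRel (K := K) (G := G) A))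
  rw [Nat.card_eq_fintype_card, Nat.card_eq_fintype_card]
  refine le_antisymm ?_ ?_
  · simpa using hli.fintype_card_le_finrank
  · simpa using LinearMap.finrank_le_finrank_of_injective
      (characterPairing_injective (K := K) A hA)
end

section
/- Let G be a finite group and A a subgroup of Aut(G) containing Inn(G). Then the number of A-orbits on the set of isomorphism classes of irreducible finite-dimensional real representations of G equals the number of ℝ-A-conjugacy classes of elements of G. -/
namespace RealOrbits

open scoped Matrix

/-! ### Real characters and the regular representation -/

section Characters

variable {G : Type*} [Group G]

/-- The character of an irreducible real representation. -/
noncomputable def chi (V : IrrRepOn ℝ G) (g : G) : ℝ :=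
  LinearMap.trace ℝ _ (V.ρ g)

/-- The matrix of `g` acting on an irreducible real representation, in the standard basis. -/
noncomputable def mat (V : IrrRepOn ℝ G) (g : G) : Matrix (Fin V.dim) (Fin V.dim) ℝ :=
  LinearMap.toMatrix' (V.ρ g)

lemma mat_mul (V : IrrRepOn ℝ G) (g h : G) : mat V (g * h) = mat V g * mat V h := by
  simp [mat, LinearMap.toMatrix'_mul]

lemma mat_one (V : IrrRepOn ℝ G) : mat V 1 = 1 := by
  simp [mat]

lemma mat_mulVec (V : IrrRepOn ℝ G) (g : G) (v : Fin V.dim → ℝ) : mat V g *ᵥ v = V.ρ g v := by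
  simp [mat]

lemma chi_eq_trace (V : IrrRepOn ℝ G) (g : G) : chi V g = (mat V g).trace := by
  simp [chi, mat, LinearMap.trace_eq_matrix_trace ℝ (Pi.basisFun ℝ (Fin V.dim)),
    LinearMap.toMatrix_eq_toMatrix']

lemma chi_one_pos (V : IrrRepOn ℝ G) : 0 < chi V 1 := by
  rw [chi_eq_trace, mat_one, Matrix.trace_one, Fintype.card_fin]
  obtain ⟨v, hv⟩ := V.nontrivial
  rcases Nat.eq_zero_or_pos V.dim with h | h
  · exfalso
    apply hv
    funext i
    exact absurd i.2 (by omega)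
  · exact_mod_cast h

/-- The matrix `P = ∑ g, ρ(g)ᵀ ρ(g)` of an invariant positive definite form conjugates `ρ(g⁻¹)` into
`ρ(g)ᵀ`. -/
lemma chi_inv [Finite G] (V : IrrRepOn ℝ G) (g : G) : chi V g⁻¹ = chi V g := by
  have := Fintype.ofFinite G
  classical
  set P : Matrix (Fin V.dim) (Fin V.dim) ℝ := ∑ x : G, (mat V x)ᵀ * mat V x with hP
  have hpos : P.PosDef := by
    have h1 : P = (1 : Matrix (Fin V.dim) (Fin V.dim) ℝ) +
        ∑ x ∈ Finset.univ.erase (1 : G), (mat V x)ᵀ * mat V x := by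

      rw [hP, ← Finset.add_sum_erase _ _ (Finset.mem_univ (1 : G)), mat_one]
      simp
    rw [h1]
    refine Matrix.PosDef.one.add_posSemidef (Matrix.posSemidef_sum _ fun x _ => ?_)
    simpa using Matrix.posSemidef_conjTranspose_mul_self (mat V x)
  have hdet : IsUnit P.det := hpos.det_pos.ne'.isUnit
  have hinv : (mat V g)ᵀ * P = P * mat V g⁻¹ := by
    rw [hP, Finset.mul_sum, Finset.sum_mul]
    conv_rhs => rw [← Equiv.sum_comp (Equiv.mulRight g)]
    refine Finset.sum_congr rfl fun x _ => ?_
    simp only [Equiv.coe_mulRight]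
    rw [mul_assoc _ (mat V (x * g)), ← mat_mul, mul_inv_cancel_right, mat_mul,
      Matrix.transpose_mul, mul_assoc]
  have hconj : mat V g⁻¹ = P⁻¹ * ((mat V g)ᵀ * P) := by
    rw [hinv, ← mul_assoc, Matrix.nonsing_inv_mul _ hdet, one_mul]
  rw [chi_eq_trace, chi_eq_trace, hconj, Matrix.trace_mul_comm, mul_assoc,
    Matrix.mul_nonsing_inv _ hdet, mul_one, Matrix.trace_transpose]

/-- The half of Schur's lemma used here: if `V` and `W` are not isomorphic, an intertwining matrix
vanishes. -/
lemma intertwiner_eq_zero (V W : IrrRepOn ℝ G)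
    (h : ¬ ∃ e : (Fin V.dim → ℝ) ≃ₗ[ℝ] (Fin W.dim → ℝ),
      ∀ (g : G) (v : Fin V.dim → ℝ), e (V.ρ g v) = W.ρ g (e v))
    (S : Matrix (Fin W.dim) (Fin V.dim) ℝ) (hS : ∀ g, S * mat V g = mat W g * S) : S = 0 := by
  by_contra hne
  have hcomm : ∀ g v, S.mulVecLin (V.ρ g v) = W.ρ g (S.mulVecLin v) := by
    intro g v
    simp only [Matrix.mulVecLin_apply, ← mat_mulVec, Matrix.mulVec_mulVec, hS]
  have hS0 : S.mulVecLin ≠ 0 := by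
    intro h0
    exact hne (Matrix.toLin'.injective (by simpa [Matrix.toLin'_apply'] using h0))
  have hker : LinearMap.ker S.mulVecLin = ⊥ := by
    refine (V.irred _ fun g v hv => ?_).resolve_right fun ht => hS0 (LinearMap.ker_eq_top.1 ht)
    rw [LinearMap.mem_ker] at hv ⊢
    rw [hcomm, hv, map_zero]
  have hrange : LinearMap.range S.mulVecLin = ⊤ := by
    refine (W.irred _ fun g w hw => ?_).resolve_left fun hb => hS0 (LinearMap.range_eq_bot.1 hb)
    obtain ⟨v, rfl⟩ := hw
    exact ⟨V.ρ g v, hcomm g v⟩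
  exact h ⟨LinearEquiv.ofBijective S.mulVecLin
    ⟨LinearMap.ker_eq_bot.1 hker, LinearMap.range_eq_top.1 hrange⟩, hcomm⟩

/-- Characters of non-isomorphic irreducibles are orthogonal. -/
lemma sum_chi_mul_chi_eq_zero [Fintype G] (V W : IrrRepOn ℝ G)
    (h : ¬ ∃ e : (Fin V.dim → ℝ) ≃ₗ[ℝ] (Fin W.dim → ℝ),
      ∀ (g : G) (v : Fin V.dim → ℝ), e (V.ρ g v) = W.ρ g (e v)) :
    ∑ g, chi V g * chi W g = 0 := by
  have key : ∀ i j, ∑ g, mat W g i i * mat V g⁻¹ j j = 0 := by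
    intro i j
    -- Averaging the elementary matrix `E i j` over `G` gives an intertwiner; take its `(i, j)` entry.
    have hz := intertwiner_eq_zero V W h
      (∑ g, mat W g * Matrix.single i j (1 : ℝ) * mat V g⁻¹) (by
        intro x
        rw [Matrix.sum_mul, Matrix.mul_sum]
        conv_lhs => rw [← Equiv.sum_comp (Equiv.mulLeft x)]
        refine Finset.sum_congr rfl fun g _ => ?_
        simp only [Equiv.coe_mulLeft]
        rw [Matrix.mul_assoc, ← mat_mul, mul_inv_rev, inv_mul_cancel_right, mat_mul]
        simp only [Matrix.mul_assoc])
    have hij := congrFun (congrFun hz i) j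
    rw [Matrix.sum_apply] at hij
    rw [← Matrix.zero_apply (α := ℝ) i j, ← hij]
    refine Finset.sum_congr rfl fun g _ => ?_
    simp [Matrix.mul_apply, Matrix.single_apply, ite_and]
  calc ∑ g, chi V g * chi W g = ∑ g, chi W g * chi V g⁻¹ := by
        refine Finset.sum_congr rfl fun g _ => ?_
        rw [chi_inv, mul_comm]
    _ = ∑ i, ∑ j, ∑ g, mat W g i i * mat V g⁻¹ j j := by
        simp only [chi_eq_trace, Matrix.trace, Matrix.diag_apply, Finset.sum_mul_sum]
        rw [Finset.sum_comm]
        exact Finset.sum_congr rfl fun i _ => Finset.sum_comm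
    _ = 0 := by simp [key]

lemma chi_eq_of_equiv (V W : IrrRepOn ℝ G) (e : (Fin V.dim → ℝ) ≃ₗ[ℝ] (Fin W.dim → ℝ)) (x y : G)
    (h : ∀ v, e (V.ρ x v) = W.ρ y (e v)) : chi V x = chi W y := by
  have : W.ρ y = e.conj (V.ρ x) := by
    refine LinearMap.ext fun w => ?_
    simp [LinearEquiv.conj_apply, h]
  rw [chi, chi, this, LinearMap.trace_conj']

/-- The representation `V` precomposed with the automorphism `α`. -/
noncomputable def twist (V : IrrRepOn ℝ G) (α : MulAut G) : IrrRepOn ℝ G where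
  dim := V.dim
  ρ := V.ρ.comp α.toMonoidHom
  nontrivial := V.nontrivial
  irred p hp := V.irred p fun g v hv => by
    simpa using hp (α⁻¹ g) v hv

lemma chi_twist (V : IrrRepOn ℝ G) (α : MulAut G) (g : G) : chi (twist V α) g = chi V (α g) := rfl

/-- A nonzero invariant subspace of a finite-dimensional representation contains an irreducible
subrepresentation, here given as an equivariant embedding `j` of some `V`. -/
lemma exists_irreducible {U : Type*} [AddCommGroup U] [Module ℝ U] [FiniteDimensional ℝ U]
    (ρ : Representation ℝ G U) (E : Submodule ℝ U) (hE : E ≠ ⊥)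
    (hinv : ∀ g, ∀ u ∈ E, ρ g u ∈ E) :
    ∃ (V : IrrRepOn ℝ G) (j : (Fin V.dim → ℝ) →ₗ[ℝ] U), Function.Injective j ∧
      (∀ v, j v ∈ E) ∧ ∀ g v, j (V.ρ g v) = ρ g (j v) := by
  -- A nonzero invariant subspace of least dimension inside `E` is irreducible.
  let T : Set (Submodule ℝ U) := {F | F ≤ E ∧ F ≠ ⊥ ∧ ∀ g, ∀ u ∈ F, ρ g u ∈ F}
  obtain ⟨F, ⟨hFE, hF0, hF⟩, hmin⟩ := WellFounded.has_min
    (IsWellFounded.wf : WellFounded ((· < ·) : Submodule ℝ U → Submodule ℝ U → Prop)) T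
    ⟨E, le_rfl, hE, hinv⟩
  let b := Module.finBasis ℝ F
  let e : F ≃ₗ[ℝ] (Fin (Module.finrank ℝ F) → ℝ) := b.equivFun
  let σ : Representation ℝ G F :=
    { toFun := fun g => (ρ g).restrict (hF g)
      map_one' := by ext; simp
      map_mul' := fun g h => by ext; simp }
  let j : (Fin (Module.finrank ℝ F) → ℝ) →ₗ[ℝ] U := F.subtype ∘ₗ e.symm.toLinearMap
  have hj : Function.Injective j := F.injective_subtype.comp e.symm.injective
  let τ : Representation ℝ G (Fin (Module.finrank ℝ F) → ℝ) :=
    { toFun := fun g => e.conj (σ g)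
      map_one' := by
        refine LinearMap.ext fun v => ?_
        simp [LinearEquiv.conj_apply]
      map_mul' := fun g h => by
        refine LinearMap.ext fun v => ?_
        simp [LinearEquiv.conj_apply] }
  have hjτ : ∀ g v, j (τ g v) = ρ g (j v) := by
    intro g v
    simp [j, τ, σ, LinearEquiv.conj_apply]
  refine ⟨⟨Module.finrank ℝ F, τ, ?_, ?_⟩, j, hj, fun v => hFE (e.symm v).2, hjτ⟩
  · obtain ⟨u, hu, hu0⟩ := Submodule.exists_mem_ne_zero_of_ne_bot hF0
    exact ⟨e ⟨u, hu⟩, fun h => hu0 (by simpa using h)⟩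
  · intro p hp
    by_cases hpb : p = ⊥
    · exact Or.inl hpb
    right
    have hle : p.map j ≤ F := by
      rintro _ ⟨v, -, rfl⟩
      exact (e.symm v).2
    have hmem : p.map j ∈ T := by
      refine ⟨hle.trans hFE, ?_, ?_⟩
      · rwa [Ne, ← Submodule.map_bot j, (Submodule.map_injective_of_injective hj).eq_iff]
      · rintro g _ ⟨v, hv, rfl⟩
        exact ⟨τ g v, hp g v hv, hjτ g v⟩
    have heq : p.map j = F := by
      by_contra hne
      exact hmin _ hmem (lt_of_le_of_ne hle hne)
    rw [eq_top_iff]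
    intro v _
    have : j v ∈ p.map j := by
      rw [heq]
      exact (e.symm v).2
    obtain ⟨w, hw, hwv⟩ := this
    exact hj hwv ▸ hw

/-- The right regular representation on functions `G → ℝ`. -/
def regular (G : Type*) [Group G] : Representation ℝ G (G → ℝ) where
  toFun g := LinearMap.funLeft ℝ ℝ (· * g)
  map_one' := by ext; simp [LinearMap.funLeft]
  map_mul' g h := by ext; simp [LinearMap.funLeft, mul_assoc]

lemma regular_apply (g : G) (u : G → ℝ) (x : G) : regular G g u x = u (x * g) := rfl

/-- Irreducible characters span the class functions invariant under inversion, in the form: such a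
function is zero if it is orthogonal to all of them. -/
lemma eq_zero_of_sum_mul_chi_eq_zero [Fintype G] (f : G → ℝ) (hinv : ∀ g, f g⁻¹ = f g)
    (hclass : ∀ g x, f (x * g * x⁻¹) = f g)
    (hf : ∀ V : IrrRepOn ℝ G, ∑ g, f g * chi V g = 0) : f = 0 := by
  classical
  -- The matrix of `∑ g, f g • g` on the regular representation.
  let M : Matrix G G ℝ := fun x y => f (x * y⁻¹)
  have hM : M.IsHermitian := by
    ext x y
    rw [Matrix.conjTranspose_apply, star_trivial]
    change f (y * x⁻¹) = f (x * y⁻¹)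
    rw [← hinv, mul_inv_rev, inv_inv]
  have hMv : ∀ u x, (M *ᵥ u) x = ∑ g, f g * u (x * g) := by
    intro u x
    rw [← Equiv.sum_comp (Equiv.mulLeft x⁻¹)]
    refine Finset.sum_congr rfl fun y _ => ?_
    simp only [Equiv.coe_mulLeft, mul_inv_cancel_left, M]
    rw [← hclass (x⁻¹ * y) x, ← hinv]
    simp
  have hcomm : ∀ g u, M *ᵥ (regular G g u) = regular G g (M *ᵥ u) := by
    intro g u
    ext x
    rw [regular_apply]
    simp only [Matrix.mulVec, dotProduct, regular_apply, M]
    rw [← Equiv.sum_comp (Equiv.mulRight g⁻¹)]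
    refine Finset.sum_congr rfl fun y _ => ?_
    simp [mul_assoc]
  have heig : hM.eigenvalues = 0 := by
    by_contra hne
    obtain ⟨i, hi⟩ := Function.ne_iff.1 hne
    set c := hM.eigenvalues i
    let E : Submodule ℝ (G → ℝ) := LinearMap.ker (M.mulVecLin - c • LinearMap.id)
    have hE : ∀ u, u ∈ E ↔ M *ᵥ u = c • u := by
      intro u
      simp [E, sub_eq_zero]
    have hE0 : E ≠ ⊥ := by
      intro hb
      have h1 : (⇑(hM.eigenvectorBasis i) : G → ℝ) ∈ E := (hE _).2 (hM.mulVec_eigenvectorBasis i)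
      rw [hb, Submodule.mem_bot] at h1
      exact hM.eigenvectorBasis.orthonormal.ne_zero i (by ext x; exact congrFun h1 x)
    obtain ⟨V, j, hj, hjE, hjρ⟩ := exists_irreducible (regular G) E hE0 (by
      intro g u hu
      rw [hE] at hu ⊢
      rw [hcomm, hu, map_smul])
    -- On this `V` the operator `∑ g, f g • g` is the scalar `c`.
    have hscalar : ∑ g, f g • V.ρ g = c • LinearMap.id := by
      refine LinearMap.ext fun v => hj ?_
      have h1 := (hE _).1 (hjE v)
      simp only [LinearMap.sum_apply, LinearMap.smul_apply, map_sum, map_smul, LinearMap.id_apply,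
        hjρ, ← h1]
      ext x
      rw [hMv, Finset.sum_apply]
      rfl
    have htr := congrArg (LinearMap.trace ℝ _) hscalar
    rw [map_sum, map_smul] at htr
    simp only [map_smul] at htr
    have h2 := hf V
    have h3 := chi_one_pos V
    simp only [chi, map_one] at h2 h3
    simp only [smul_eq_mul] at htr
    rw [h2] at htr
    exact (mul_ne_zero hi h3.ne') htr.symm
  have hM0 : M = 0 := hM.eigenvalues_eq_zero_iff.1 heig
  ext g
  simpa [M] using congrFun (congrFun hM0 g) 1

end Characters

/-! ### Orbit sums -/

section Orbits

variable {G : Type*} [Group G] (A : Subgroup (MulAut G)) [Fintype A]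

/-- The sum of the characters of the twists of `V` by the elements of `A`. -/
noncomputable def orbitSum (V : IrrRepOn ℝ G) (g : G) : ℝ :=
  ∑ α : A, chi V ((α : MulAut G) g)

lemma orbitSum_eq_of_repRel {V W : IrrRepOn ℝ G} (h : repRel A V W) :
    orbitSum A V = orbitSum A W := by
  obtain ⟨α, hα, e, he⟩ := h
  ext g
  rw [orbitSum, orbitSum, ← Equiv.sum_comp (Equiv.mulLeft (⟨α, hα⟩ : A))]
  exact Finset.sum_congr rfl fun β _ => chi_eq_of_equiv V W e _ _ (he _)

lemma orbitSum_eq_of_RConjRel [Finite G] (V : IrrRepOn ℝ G) {g h : G} (hgh : RConjRel A g h) :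
    orbitSum A V g = orbitSum A V h := by
  have key : ∀ α ∈ A, ∀ x, orbitSum A V (α x) = orbitSum A V x := by
    intro α hα x
    rw [orbitSum, orbitSum]
    conv_rhs => rw [← Equiv.sum_comp (Equiv.mulRight (⟨α, hα⟩ : A))]
    rfl
  obtain ⟨α, hα, rfl | rfl⟩ := hgh
  · exact key α hα h
  · rw [key α hα, orbitSum, orbitSum]
    refine Finset.sum_congr rfl fun β _ => ?_
    rw [map_inv, chi_inv]

lemma sum_orbitSum_mul_orbitSum_eq_zero [Fintype G] {V W : IrrRepOn ℝ G} (h : ¬ repRel A V W) :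
    ∑ g, orbitSum A V g * orbitSum A W g = 0 := by
  simp only [orbitSum, Finset.sum_mul_sum]
  rw [Finset.sum_comm]
  refine Finset.sum_eq_zero fun α _ => ?_
  rw [Finset.sum_comm]
  refine Finset.sum_eq_zero fun β _ => ?_
  refine sum_chi_mul_chi_eq_zero (twist V α) (twist W β) ?_
  rintro ⟨e, he⟩
  refine h ⟨α * β⁻¹, A.mul_mem α.2 (A.inv_mem β.2), e, fun g v => ?_⟩
  have := he ((β : MulAut G)⁻¹ g) v
  change e (V.ρ ((α : MulAut G) ((β : MulAut G)⁻¹ g)) v) =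
    W.ρ ((β : MulAut G) ((β : MulAut G)⁻¹ g)) (e v) at this
  rwa [MulAut.apply_inv_self] at this

lemma orbitSum_ne_zero (V : IrrRepOn ℝ G) : orbitSum A V ≠ 0 := by
  intro h
  have h1 := congrFun h 1
  simp only [orbitSum, map_one, Pi.zero_apply] at h1
  exact (Finset.sum_pos (fun _ _ => chi_one_pos V) Finset.univ_nonempty).ne' h1

/-- Pairing an `A`-invariant function with `orbitSum A V` is `|A|` times pairing it with the
character of `V`. -/
lemma sum_mul_orbitSum [Fintype G] (V : IrrRepOn ℝ G) (f : G → ℝ)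
    (hf : ∀ α ∈ A, ∀ g, f (α g) = f g) :
    ∑ g, f g * orbitSum A V g = Fintype.card A * ∑ g, f g * chi V g := by
  simp only [orbitSum, Finset.mul_sum]
  rw [Finset.sum_comm]
  have : ∀ α : A, ∑ g, f g * chi V ((α : MulAut G) g) = ∑ g, f g * chi V g := by
    intro α
    conv_rhs => rw [← Equiv.sum_comp (α : MulAut G).toEquiv]
    refine Finset.sum_congr rfl fun g _ => ?_
    rw [MulEquiv.toEquiv_eq_coe, MulEquiv.coe_toEquiv, hf α α.2]
  simp [this, Finset.mul_sum]

/-- The functions on `G` that are constant on ℝ-`A`-conjugacy classes, as a subspace of the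
Euclidean space of all functions. -/
def invariants : Submodule ℝ (EuclideanSpace ℝ G) where
  carrier := {f | ∀ g h, RConjRel A g h → f g = f h}
  zero_mem' := by simp
  add_mem' hf hf' g h hgh := by simp [hf g h hgh, hf' g h hgh]
  smul_mem' c f hf g h hgh := by simp [hf g h hgh]

/-- Functions constant on classes are the functions on the set of classes. -/
noncomputable def invariantsEquiv : invariants A ≃ₗ[ℝ] (Quot (RConjRel A) → ℝ) where
  toFun f q := Quot.lift (fun g => f.1 g) f.2 q
  map_add' f f' := by
    ext q
    induction q using Quot.ind
    rfl
  map_smul' c f := by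
    ext q
    induction q using Quot.ind
    rfl
  invFun φ := ⟨WithLp.toLp 2 fun g => φ (Quot.mk _ g), fun g h hgh => by
    simp [Quot.sound hgh]⟩
  left_inv f := rfl
  right_inv φ := by
    ext q
    induction q using Quot.ind
    rfl

/-- The orbit sum, as a vector attached to an `A`-orbit of irreducibles. -/
noncomputable def orbitVec (q : Quot (repRel (K := ℝ) (G := G) A)) : EuclideanSpace ℝ G :=
  WithLp.toLp 2 (Quot.lift (orbitSum A) (fun _ _ => orbitSum_eq_of_repRel A) q)

lemma inner_orbitVec_mk [Fintype G] (V : IrrRepOn ℝ G) (f : EuclideanSpace ℝ G) :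
    inner ℝ (orbitVec A (Quot.mk _ V)) f = ∑ g, f g * orbitSum A V g := by
  simp [orbitVec, PiLp.inner_apply]

lemma linearIndependent_orbitVec [Fintype G] : LinearIndependent ℝ (orbitVec A) := by
  refine linearIndependent_of_ne_zero_of_inner_eq_zero ?_ ?_
  · rintro ⟨V⟩ h
    refine orbitSum_ne_zero A V ?_
    ext g
    exact congrFun (congrArg WithLp.ofLp h) g
  · rintro ⟨V⟩ ⟨W⟩ hVW
    rw [inner_orbitVec_mk]
    refine sum_orbitSum_mul_orbitSum_eq_zero A fun h => hVW ?_
    exact (Quot.sound h).symm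

lemma span_orbitVec [Fintype G] (hA : MulAut.conj.range ≤ A) :
    Submodule.span ℝ (Set.range (orbitVec A)) = invariants A := by
  have hle : Submodule.span ℝ (Set.range (orbitVec A)) ≤ invariants A := by
    rw [Submodule.span_le]
    rintro _ ⟨⟨V⟩, rfl⟩
    exact fun g h hgh => orbitSum_eq_of_RConjRel A V hgh
  rw [← Submodule.sup_orthogonal_inf_of_hasOrthogonalProjection hle, eq_comm, sup_eq_left]
  rintro f ⟨hf, hfI⟩
  have hα : ∀ α ∈ A, ∀ g, f (α g) = f g := fun α hα g => hfI _ _ ⟨α, hα, Or.inl rfl⟩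
  have h0 : (fun g => f g) = 0 := by
    refine eq_zero_of_sum_mul_chi_eq_zero _ ?_ ?_ ?_
    · intro g
      exact hfI _ _ ⟨1, A.one_mem, Or.inr rfl⟩
    · intro g x
      exact hα (MulAut.conj x) (hA ⟨x, rfl⟩) g
    · intro V
      have h1 := hf _ (Submodule.subset_span ⟨Quot.mk _ V, rfl⟩)
      rw [inner_orbitVec_mk, sum_mul_orbitSum A V _ hα] at h1
      exact (mul_eq_zero.1 h1).resolve_left (by simp)
  have : f = 0 := by
    ext g
    exact congrFun h0 g
  rw [this]
  exact Submodule.zero_mem _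

end Orbits

end RealOrbits

/-- Let `G` be a finite group and `A ≤ Aut(G)` a subgroup containing `Inn(G)`.  Then the
number of `A`-orbits on the set of isomorphism classes of irreducible finite-dimensional
real representations of `G` equals the number of ℝ-`A`-conjugacy classes of elements
of `G`. -/
theorem card_real_irr_orbits_eq_card_RConjClasses (G : Type*) [Group G] [Finite G]
    (A : Subgroup (MulAut G)) (hA : MulAut.conj.range ≤ A) :
    Nat.card (Quot (repRel (K := ℝ) (G := G) A)) = Nat.card (Quot (RConjRel A)) := by
  have := Fintype.ofFinite G
  have := Finite.of_injective (fun α : MulAut G => (α : G → G)) DFunLike.coe_injective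
  have := Fintype.ofFinite A
  rw [← Module.finrank_eq_nat_card_basis
      (Module.Basis.span (RealOrbits.linearIndependent_orbitVec A)),
    RealOrbits.span_orbitVec A hA, (RealOrbits.invariantsEquiv A).finrank_eq]
  have := Fintype.ofFinite (Quot (RConjRel A))
  rw [Module.finrank_fintype_fun_eq_card, Nat.card_eq_fintype_card]
end

section
/- Let G be a finite group and A a subgroup of Aut(G) containing Inn(G). Then the number of A-orbits on the set of isomorphism classes of irreducible finite-dimensional rational representations of G equals the number of ℚ-A-conjugacy classes of elements of G. -/
/-! ### Rational characters are constant on generators of a cyclic subgroup -/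

section Galois
open Representation

lemma geom_mul (n : ℕ) {R : Type*} [Ring R] (B : R) (hB : B ^ n = 1) :
    B * ∑ j ∈ Finset.range n, B ^ j = ∑ j ∈ Finset.range n, B ^ j := by
  have := mul_geom_sum B n
  rw [hB, sub_self, sub_mul, one_mul, sub_eq_zero] at this
  exact this

lemma trace_idem_nat {K : Type*} [Field K] {V : Type*} [AddCommGroup V] [Module K V]
    [FiniteDimensional K V] (P : Module.End K V) (hP : P * P = P) :
    ∃ m : ℕ, LinearMap.trace K V P = m :=
  ⟨_, (LinearMap.IsIdempotentElem.isProj_range P hP).trace⟩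

/-- If `M ^ n = 1` and `z` is a primitive `n`-th root of unity, then `M` is diagonalizable with
eigenvalues among the `z ^ i`, and `m i` is the multiplicity of `z ^ i`. The spectral projections
are `n⁻¹ • ∑ j < n, (z⁻¹ ^ i • M) ^ j`; their traces are natural numbers since they are
idempotent. -/
lemma trace_pow_decomp {K : Type*} [Field K] {V : Type*} [AddCommGroup V] [Module K V] [FiniteDimensional K V]
    [CharZero K] (n : ℕ) (hn : 0 < n) (z : K) (hz : IsPrimitiveRoot z n)
    (M : Module.End K V) (hM : M ^ n = 1) :
    ∃ m : ℕ → ℕ, ∀ k : ℕ, LinearMap.trace K V (M ^ k) =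
      ∑ i ∈ Finset.range n, z ^ (i * k) * (m i : K) := by
  have hz0 : z ≠ 0 := hz.ne_zero hn.ne'
  have hn0 : (n : K) ≠ 0 := by exact_mod_cast hn.ne'
  let B : ℕ → Module.End K V := fun i => (z⁻¹ ^ i) • M
  -- `n` times the projection onto the eigenspace of `M` for `z ^ i`
  let S : ℕ → Module.End K V := fun i => ∑ j ∈ Finset.range n, B i ^ j
  have hB : ∀ i, B i ^ n = 1 := by
    intro i
    simp only [B]
    rw [smul_pow, hM, ← pow_mul, mul_comm, pow_mul, inv_pow, hz.pow_eq_one]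
    simp
  have hBS : ∀ i, B i * S i = S i := fun i => geom_mul n _ (hB i)
  have hBjS : ∀ i j, B i ^ j * S i = S i := by
    intro i j
    induction j with
    | zero => simp
    | succ j ih => rw [pow_succ, mul_assoc, hBS, ih]
  have hSS : ∀ i, S i * S i = (n : K) • S i := by
    intro i
    conv_lhs => lhs; simp only [S]
    rw [Finset.sum_mul, Finset.sum_congr rfl (fun j _ => hBjS i j)]
    simp [← Nat.cast_smul_eq_nsmul K]
  have hMS : ∀ i k, M ^ k * S i = z ^ (i * k) • S i := by
    intro i k
    have h := hBjS i k
    simp only [B] at h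
    rw [smul_pow, smul_mul_assoc] at h
    rw [pow_mul]
    nth_rw 2 [← h]
    rw [smul_smul, ← mul_pow, ← mul_pow, mul_inv_cancel₀ hz0]
    simp
  have hsum : ∑ i ∈ Finset.range n, S i = (n : K) • (1 : Module.End K V) := by
    simp only [S, B]
    rw [Finset.sum_comm]
    simp_rw [smul_pow, ← pow_mul]
    simp_rw [mul_comm _ (_ : ℕ), pow_mul _ _ (_ : ℕ), ← Finset.sum_smul]
    rw [Finset.sum_eq_single 0]
    · simp
    · intro j hj hj0
      have : (z⁻¹ ^ j) ≠ 1 := by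
        rw [inv_pow, ne_eq, inv_eq_one]
        exact hz.pow_ne_one_of_pos_of_lt hj0 (Finset.mem_range.mp hj)
      rw [geom_sum_eq this, ← pow_mul, mul_comm j n, pow_mul, inv_pow, hz.pow_eq_one]
      simp
    · intro h
      simp at h
      omega
  have hP : ∀ i, ∃ m : ℕ, LinearMap.trace K V ((n : K)⁻¹ • S i) = m := by
    intro i
    apply trace_idem_nat
    rw [smul_mul_smul_comm, hSS, smul_smul, mul_assoc, inv_mul_cancel₀ hn0, mul_one]
  choose m hm using hP
  refine ⟨m, fun k => ?_⟩
  have : M ^ k = ∑ i ∈ Finset.range n, z ^ (i * k) • ((n : K)⁻¹ • S i) := by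
    have h1 : M ^ k * ((n : K)⁻¹ • ∑ i ∈ Finset.range n, S i) = M ^ k := by
      rw [hsum, smul_smul, inv_mul_cancel₀ hn0]; simp
    rw [← h1, Finset.smul_sum, Finset.mul_sum]
    refine Finset.sum_congr rfl fun i _ => ?_
    rw [mul_smul_comm, hMS, smul_comm]
  rw [this, map_sum]
  simp only [map_smul, ← hm, smul_eq_mul]

/-- Over a cyclotomic field `L`, the trace of `M ^ k` is obtained from that of `M` by the Galois
automorphism `ζ ↦ ζ ^ k`, which fixes the rational number `trace M`. -/
lemma trace_pow_coprime_aux (L : Type*) [Field L] [CharZero L] [Algebra ℚ L] {V : Type*}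
    [AddCommGroup V] [Module ℚ V] [FiniteDimensional ℚ V] (n : ℕ) [IsCyclotomicExtension {n} ℚ L]
    (hn : 0 < n) (M : Module.End ℚ V) (hM : M ^ n = 1) (k : ℕ) (hk : k.Coprime n) :
    LinearMap.trace ℚ V (M ^ k) = LinearMap.trace ℚ V M := by
  have : NeZero n := ⟨hn.ne'⟩
  let z : L := IsCyclotomicExtension.zeta n ℚ L
  have hz : IsPrimitiveRoot z n := IsCyclotomicExtension.zeta_spec n ℚ L
  have hz' := hz.pow_of_coprime k hk
  let s : Gal(L/ℚ) := IsCyclotomicExtension.fromZetaAut hz'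
    (Polynomial.cyclotomic.irreducible_rat hn)
  have hs : s z = z ^ k := IsCyclotomicExtension.fromZetaAut_spec hz' _
  have hbc : ∀ j, (M.baseChange L) ^ j = (M ^ j).baseChange L := by
    intro j
    induction j with
    | zero => simp
    | succ j ih => rw [pow_succ, pow_succ, ih, LinearMap.baseChange_mul]
  obtain ⟨m, hm⟩ := trace_pow_decomp n hn z hz (M.baseChange L) (by
    rw [hbc, hM]; simp)
  have e1 := hm 1
  have ek := hm k
  rw [hbc, LinearMap.trace_baseChange] at e1 ek
  have e1' := congrArg s e1
  simp only [map_sum, map_mul, map_pow, AlgEquiv.commutes, map_natCast, hs, pow_one, mul_one] at e1'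
  apply (algebraMap ℚ L).injective
  rw [ek, e1']
  refine Finset.sum_congr rfl fun i _ => ?_
  rw [← pow_mul, mul_comm k i]

lemma trace_pow_coprime {V : Type*} [AddCommGroup V] [Module ℚ V] [FiniteDimensional ℚ V]
    (n : ℕ) (hn : 0 < n) (M : Module.End ℚ V) (hM : M ^ n = 1) (k : ℕ) (hk : k.Coprime n) :
    LinearMap.trace ℚ V (M ^ k) = LinearMap.trace ℚ V M := by
  have : NeZero n := NeZero.of_pos hn
  -- The instance found by default comes from `CharZero`; `CyclotomicField n ℚ` is known to be
  -- cyclotomic for this one.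
  let _ : Algebra ℚ (CyclotomicField n ℚ) := CyclotomicField.algebra n ℚ
  exact trace_pow_coprime_aux (CyclotomicField n ℚ) n hn M hM k hk

lemma char_eq_of_zpowers_eq {G : Type*} [Group G] [Finite G] {V : Type*} [AddCommGroup V]
    [Module ℚ V] [FiniteDimensional ℚ V] (ρ : Representation ℚ G V) {g h : G}
    (hgh : Subgroup.zpowers g = Subgroup.zpowers h) : ρ.character g = ρ.character h := by
  have hg : g ∈ Submonoid.powers h := by
    rw [mem_powers_iff_mem_zpowers, ← hgh]; exact Subgroup.mem_zpowers g
  obtain ⟨k, rfl⟩ := hg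
  have hc : k.Coprime (orderOf h) := by
    have h1 : orderOf (h ^ k) = orderOf h := by
      rw [← Nat.card_zpowers, ← Nat.card_zpowers]
      exact congrArg (fun H : Subgroup G => Nat.card H) hgh
    rw [orderOf_pow, Nat.div_eq_self] at h1
    rcases h1 with h1 | h1
    · exact absurd h1 (orderOf_pos h).ne'
    · exact Nat.Coprime.symm h1
  simp only [character, map_pow]
  exact trace_pow_coprime (orderOf h) (orderOf_pos h) _
    (by rw [← map_pow, pow_orderOf_eq_one, map_one]) k hc

end Galois

/-! ### Sums over cyclic subgroups and permutation characters -/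

section Perm
open Representation
variable {G : Type*} [Group G]

/-- The permutation representation of `G` on the space of rational functions on `G ⧸ C`,
`(g • u) x = u (g⁻¹ • x)`. -/
def permRep (C : Subgroup G) : Representation ℚ G (G ⧸ C → ℚ) where
  toFun g := LinearMap.funLeft ℚ ℚ (fun x => g⁻¹ • x)
  map_one' := by ext; simp [LinearMap.funLeft]
  map_mul' g h := by ext; simp [LinearMap.funLeft, mul_smul]

open Classical in
/-- The permutation character counts fixed points. -/
lemma permRep_character [Fintype G] (C : Subgroup G) [Fintype (G ⧸ C)] (g : G) :
    (permRep C).character g = ∑ x : G ⧸ C, if g • x = x then 1 else 0 := by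
  rw [character, LinearMap.trace_eq_matrix_trace ℚ (Pi.basisFun ℚ _), Matrix.trace]
  refine Finset.sum_congr rfl fun x _ => ?_
  have h : g⁻¹ • x = x ↔ g • x = x := by rw [inv_smul_eq_iff, eq_comm]
  simp [permRep, LinearMap.funLeft_apply, Pi.single_apply, h]

open Classical in
/-- Frobenius reciprocity for the trivial representation of `C` and a class function `f`: pairing
`f` with the character of `ℚ[G ⧸ C]` sums `f` over `C`, up to a nonzero factor. -/
lemma sum_mul_permRep_character [Fintype G] (C : Subgroup G) (f : G → ℚ)
    (hf : ∀ x g, f (x * g * x⁻¹) = f g) :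
    ∑ g, f g * (permRep C).character g =
      Nat.card (G ⧸ C) * ∑ g, if g ∈ C then f g else 0 := by
  have := Fintype.ofFinite (G ⧸ C)
  simp_rw [permRep_character, Finset.mul_sum]
  rw [Finset.sum_comm, ← Finset.mul_sum, Nat.card_eq_fintype_card, ← nsmul_eq_mul,
    ← Finset.card_univ, ← Finset.sum_const]
  refine Finset.sum_congr rfl fun x _ => ?_
  obtain ⟨y, rfl⟩ := QuotientGroup.mk_surjective x
  -- `g` lies in `C` exactly when `y * g * y⁻¹` fixes the coset `y C`.
  symm
  refine Fintype.sum_equiv (MulAut.conj y).toEquiv _ _ fun g => ?_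
  have h : (MulAut.conj y g • (y : G ⧸ C) = y) ↔ g ∈ C := by
    rw [MulAut.conj_apply, MulAction.Quotient.smul_coe, eq_comm, QuotientGroup.eq]
    simp
  simp only [MulEquiv.toEquiv_eq_coe, EquivLike.coe_coe, h]
  simp [hf]

/-- By induction on the order of `⟨c⟩`: the elements of `⟨c⟩` that do not generate it contribute
zero to the sum over `⟨c⟩`, and the generators all contribute `f c`. -/
lemma eq_zero_of_sum_cyclic [Fintype G] (f : G → ℚ)
    (hf : ∀ g h, Subgroup.zpowers g = Subgroup.zpowers h → f g = f h)
    (hs : ∀ c : G, (∑ g with g ∈ Subgroup.zpowers c, f g) = 0) : f = 0 := by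
  classical
  suffices H : ∀ n, ∀ c : G, Nat.card (Subgroup.zpowers c) = n → f c = 0 from
    funext fun c => H _ c rfl
  intro n
  induction n using Nat.strong_induction_on with
  | _ n ih =>
    intro c hc
    have h := hs c
    have h2 : ∑ g with g ∈ Subgroup.zpowers c, f g =
        ∑ g with Subgroup.zpowers g = Subgroup.zpowers c, f c := by
      rw [Finset.sum_filter, Finset.sum_filter]
      refine Finset.sum_congr rfl fun g _ => ?_
      by_cases hg : g ∈ Subgroup.zpowers c
      · by_cases hgc : Subgroup.zpowers g = Subgroup.zpowers c
        · simp [hg, hgc, hf g c hgc]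
        · simp only [hg, hgc, if_true, if_false]
          have hle : Subgroup.zpowers g ≤ Subgroup.zpowers c := by simpa using hg
          refine ih _ ?_ g rfl
          rw [← hc]
          refine lt_of_le_of_ne (Subgroup.card_le_of_le hle) fun he => hgc ?_
          exact Subgroup.eq_of_le_of_card_ge hle he.ge
      · have : Subgroup.zpowers g ≠ Subgroup.zpowers c := fun h => hg (h ▸ Subgroup.mem_zpowers g)
        simp [hg, this]
    rw [h2, Finset.sum_const, nsmul_eq_mul, mul_eq_zero] at h
    refine h.resolve_left ?_
    rw [Nat.cast_eq_zero, Finset.card_eq_zero]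
    exact Finset.ne_empty_of_mem (a := c) (by simp)
end Perm

/-! ### Reduction to irreducible characters -/

section Irr
open Representation
variable {G : Type*} [Group G]

lemma character_eq_add {V : Type*} [AddCommGroup V] [Module ℚ V] [FiniteDimensional ℚ V]
    (ρ : Representation ℚ G V) (p q : Subrepresentation ρ) (h : IsCompl p q) (g : G) :
    ρ.character g = p.toRepresentation.character g + q.toRepresentation.character g := by
  have hc : IsCompl p.toSubmodule q.toSubmodule := by
    refine ⟨disjoint_iff.2 ?_, codisjoint_iff.2 ?_⟩
    · rw [← Subrepresentation.toSubmodule_inf, disjoint_iff.1 h.1]; rfl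
    · rw [← Subrepresentation.toSubmodule_sup, codisjoint_iff.1 h.2]; rfl
  simp only [character]
  rw [← LinearMap.trace_prodMap', ← LinearMap.trace_conj' _ (Submodule.prodEquivOfIsCompl _ _ hc)]
  congr 1
  ext v
  obtain ⟨w, rfl⟩ := (Submodule.prodEquivOfIsCompl _ _ hc).surjective v
  simp [LinearEquiv.conj_apply, Subrepresentation.toRepresentation]

/-- Maschke's theorem, transported from modules over the group algebra. -/
instance isSemisimple_rat [Finite G] {V : Type*} [AddCommGroup V] [Module ℚ V]
    (ρ : Representation ℚ G V) : IsSemisimpleRepresentation ρ := by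
  rw [isSemisimpleRepresentation_iff_isSemisimpleModule_asModule]
  infer_instance

/-- A basis carries an irreducible representation over to the standard space `Fin n → ℚ`. -/
lemma exists_irrRepOn {V : Type*} [AddCommGroup V] [Module ℚ V] [FiniteDimensional ℚ V]
    (ρ : Representation ℚ G V) [Nontrivial V]
    (hirr : ∀ p : Subrepresentation ρ, p = ⊥ ∨ p = ⊤) :
    ∃ W : IrrRepOn ℚ G, W.ρ.character = ρ.character := by
  let e : V ≃ₗ[ℚ] (Fin (Module.finrank ℚ V) → ℚ) := (Module.finBasis ℚ V).equivFun
  let σ : Representation ℚ G (Fin (Module.finrank ℚ V) → ℚ) :=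
    { toFun := fun g => e.conj (ρ g)
      map_one' := by ext; simp [LinearEquiv.conj_apply]
      map_mul' := fun g h => by ext; simp [LinearEquiv.conj_apply] }
  refine ⟨⟨Module.finrank ℚ V, σ, ?_, ?_⟩, ?_⟩
  · obtain ⟨v, hv⟩ := exists_ne (0 : V)
    exact ⟨e v, by simpa using hv⟩
  · intro p hp
    rcases hirr ⟨p.comap e.toLinearMap, fun g v hv => by
      have := hp g _ hv
      simpa [σ, LinearEquiv.conj_apply] using this⟩ with h | h
    · left
      have h := congrArg Subrepresentation.toSubmodule h
      change p.comap e.toLinearMap = ⊥ at h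
      rw [eq_bot_iff]
      intro v hv
      have : e.symm v ∈ p.comap e.toLinearMap := by simpa using hv
      rw [h] at this
      simpa using this
    · right
      have h := congrArg Subrepresentation.toSubmodule h
      change p.comap e.toLinearMap = ⊤ at h
      rw [eq_top_iff]
      intro v _
      have : e.symm v ∈ p.comap e.toLinearMap := by rw [h]; trivial
      simpa using this
  · ext g
    exact LinearMap.trace_conj' (ρ g) e

/-- By complete reducibility, and induction on the dimension `n` of `V`, orthogonality to the
irreducible characters implies orthogonality to every character. -/
lemma sum_mul_character_eq_zero [Fintype G] (f : G → ℚ)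
    (hf : ∀ W : IrrRepOn ℚ G, ∑ g, f g * W.ρ.character g = 0) (n : ℕ) :
    ∀ {V : Type*} [AddCommGroup V] [Module ℚ V] [FiniteDimensional ℚ V]
      (ρ : Representation ℚ G V), Module.finrank ℚ V = n → ∑ g, f g * ρ.character g = 0 := by
  induction n using Nat.strong_induction_on with
  | _ n ih =>
    intro V _ _ _ ρ hV
    rcases subsingleton_or_nontrivial V with hs | hs
    · refine Finset.sum_eq_zero fun g _ => ?_
      rw [character, Subsingleton.elim (ρ g) 0, map_zero, mul_zero]
    by_cases hirr : ∀ p : Subrepresentation ρ, p = ⊥ ∨ p = ⊤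
    · obtain ⟨W, hW⟩ := exists_irrRepOn ρ hirr
      rw [← hW]; exact hf W
    · push Not at hirr
      obtain ⟨p, hp0, hp1⟩ := hirr
      obtain ⟨q, hq⟩ := exists_isCompl p
      have hlt : ∀ r : Subrepresentation ρ, r ≠ ⊤ → Module.finrank ℚ r.toSubmodule < n := by
        intro r hr
        rw [← hV]
        apply Submodule.finrank_lt
        intro h
        exact hr (Subrepresentation.toSubmodule_injective h)
      have hq1 : q ≠ ⊤ := by
        rintro rfl
        exact hp0 (by simpa using hq.inf_eq_bot)
      simp_rw [character_eq_add ρ p q hq, mul_add, Finset.sum_add_distrib]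
      rw [ih _ (hlt p hp1) _ rfl, ih _ (hlt q hq1) _ rfl, add_zero]
end Irr

/-! ### Orbit sums of irreducible characters -/

section Orb
open Representation
variable {G : Type*} [Group G]

/-- The sum of the characters of the twists of `V` by all `α ∈ A`. It is a positive multiple of
the sum over the `A`-orbit of `V`, and needs no description of the stabilizer. -/
noncomputable def orbitChar (A : Subgroup (MulAut G)) [Fintype A] (V : IrrRepOn ℚ G) (g : G) : ℚ :=
  ∑ α : A, V.ρ.character ((α : MulAut G) g)

lemma orbitChar_eq_of_qConjRel [Finite G] (A : Subgroup (MulAut G)) [Fintype A]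
    (V : IrrRepOn ℚ G) {g h : G} (hgh : QConjRel A g h) : orbitChar A V g = orbitChar A V h := by
  obtain ⟨α, hα, h1⟩ := hgh
  unfold orbitChar
  refine Fintype.sum_equiv (Equiv.mulRight (⟨α, hα⟩ : A)) _ _ fun β => ?_
  apply char_eq_of_zpowers_eq
  have : (Subgroup.zpowers g).map (β : MulAut G).toMonoidHom =
      ((Subgroup.zpowers h).map α.toMonoidHom).map (β : MulAut G).toMonoidHom := by rw [h1]
  simpa [MonoidHom.map_zpowers] using this

lemma orbitChar_eq_of_repRel (A : Subgroup (MulAut G)) [Fintype A] {V W : IrrRepOn ℚ G}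
    (h : repRel A V W) : orbitChar A V = orbitChar A W := by
  obtain ⟨α, hα, e, he⟩ := h
  have key : ∀ g, W.ρ.character g = V.ρ.character (α g) := by
    intro g
    simp only [character]
    rw [← LinearMap.trace_conj' (V.ρ (α g)) e]
    congr 1
    refine LinearMap.ext fun v => ?_
    simp [LinearEquiv.conj_apply, he]
  funext g
  unfold orbitChar
  simp_rw [key]
  exact (Fintype.sum_equiv (Equiv.mulLeft (⟨α, hα⟩ : A)) _ _ fun β => by simp).symm

/-- The value at `1` is `|A| * dim V`. -/
lemma orbitChar_one_ne_zero (A : Subgroup (MulAut G)) [Fintype A] (V : IrrRepOn ℚ G) :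
    orbitChar A V 1 ≠ 0 := by
  obtain ⟨v, hv⟩ := V.nontrivial
  have : V.dim ≠ 0 := by
    intro h
    apply hv
    funext i
    exact absurd i.2 (by omega)
  simp [orbitChar, this, Fintype.card_ne_zero]

/-- Schur's lemma: a nonzero intertwining map between the twist of `V` by `α` and the twist of `W`
by `β` is an isomorphism. -/
lemma repRel_of_intertwining (A : Subgroup (MulAut G)) {V W : IrrRepOn ℚ G} {α β : MulAut G}
    (hα : α ∈ A) (hβ : β ∈ A) (f : (Fin V.dim → ℚ) →ₗ[ℚ] (Fin W.dim → ℚ)) (hf0 : f ≠ 0)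
    (hf : ∀ g v, f (V.ρ (α g) v) = W.ρ (β g) (f v)) : repRel A V W := by
  have hfW : ∀ g v, f (V.ρ (α (β⁻¹ g)) v) = W.ρ g (f v) := by
    intro g v
    rw [hf]
    simp
  have hker : LinearMap.ker f = ⊥ := by
    refine (V.irred (LinearMap.ker f) fun g v hv => ?_).resolve_right fun h => hf0 ?_
    · have := hf (α⁻¹ g) v
      simp only [MulAut.apply_inv_self] at this
      rw [LinearMap.mem_ker] at hv ⊢
      rw [this, hv, map_zero]
    · exact LinearMap.ker_eq_top.1 h
  have hran : LinearMap.range f = ⊤ := by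
    refine (W.irred (LinearMap.range f) fun g v hv => ?_).resolve_left fun h => hf0 ?_
    · obtain ⟨w, rfl⟩ := hv
      exact ⟨_, hfW g w⟩
    · exact LinearMap.range_eq_bot.1 h
  exact ⟨α * β⁻¹, A.mul_mem hα (A.inv_mem hβ),
    LinearEquiv.ofBijective f ⟨LinearMap.ker_eq_bot.1 hker, LinearMap.range_eq_top.1 hran⟩,
    fun g v => hfW g v⟩

/-- Orbit sums for different orbits are orthogonal: the inner product of the characters of two
twists is the dimension of the space of intertwining maps, which is zero by Schur's lemma. -/
lemma sum_orbitChar_mul_eq_zero [Fintype G] (A : Subgroup (MulAut G)) [Fintype A]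
    {V W : IrrRepOn ℚ G} (h : ¬ repRel A V W) :
    ∑ g, orbitChar A V g * orbitChar A W g = 0 := by
  have hN : (Nat.card G : ℚ) ≠ 0 := by simp
  let _ : Invertible (Nat.card G : ℚ) := invertibleOfNonzero hN
  have key : ∀ α β : A,
      ∑ g, V.ρ.character ((α : MulAut G) g) * W.ρ.character ((β : MulAut G) g) = 0 := by
    intro α β
    have h1 := card_inv_mul_sum_char_mul_char_eq_finrank
      (V.ρ.comp (α : MulAut G).toMonoidHom) (W.ρ.comp (β : MulAut G).toMonoidHom)
    have hsub : Subsingleton (IntertwiningMap (V.ρ.comp (α : MulAut G).toMonoidHom)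
        (W.ρ.comp (β : MulAut G).toMonoidHom)) := by
      refine subsingleton_of_forall_eq 0 fun f => ?_
      by_contra hf
      refine h (repRel_of_intertwining A α.2 β.2 f.toLinearMap (fun h0 => hf ?_) fun g v => ?_)
      · exact DFunLike.ext _ _ fun v => LinearMap.congr_fun h0 v
      · exact LinearMap.congr_fun (f.isIntertwining' g) v
    rw [Module.finrank_zero_of_subsingleton, Nat.cast_zero, mul_eq_zero] at h1
    rw [← h1.resolve_left (inv_ne_zero hN)]
    refine Finset.sum_congr rfl fun g _ => ?_
    rw [mul_comm]
    congr 1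
    -- The inner product formula involves `g⁻¹`, which generates the same subgroup as `g`.
    change V.ρ.character ((α : MulAut G) g) = V.ρ.character ((α : MulAut G) g⁻¹)
    apply char_eq_of_zpowers_eq
    rw [map_inv, Subgroup.zpowers_inv]
  simp_rw [orbitChar, Finset.sum_mul_sum]
  rw [Finset.sum_comm]
  refine Finset.sum_eq_zero fun α _ => ?_
  rw [Finset.sum_comm]
  exact Finset.sum_eq_zero fun β _ => key α β

/-- The orbit sums are complete among functions constant on ℚ-`A`-classes: such a function
orthogonal to all of them is `A`-invariant, so it is orthogonal to all irreducible characters, hence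
to the permutation characters `ℚ[G ⧸ C]` with `C` cyclic, and so its sum over each `C` is zero. -/
lemma eq_zero_of_orbitChar_orthogonal [Fintype G] (A : Subgroup (MulAut G)) [Fintype A]
    (hA : MulAut.conj.range ≤ A) (f : G → ℚ) (hf : ∀ g h, QConjRel A g h → f g = f h)
    (h0 : ∀ V : IrrRepOn ℚ G, ∑ g, f g * orbitChar A V g = 0) : f = 0 := by
  have hfA : ∀ α ∈ A, ∀ g, f (α g) = f g := fun α hα g =>
    hf _ _ ⟨α, hα, by rw [MonoidHom.map_zpowers]; rfl⟩
  have hfz : ∀ g h, Subgroup.zpowers g = Subgroup.zpowers h → f g = f h := fun g h hgh =>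
    hf _ _ ⟨1, A.one_mem, by rw [hgh]; exact Subgroup.map_id _⟩
  have hV : ∀ V : IrrRepOn ℚ G, ∑ g, f g * V.ρ.character g = 0 := by
    intro V
    have h1 : ∑ g, f g * orbitChar A V g =
        ∑ α : A, ∑ g, f g * V.ρ.character g := by
      simp_rw [orbitChar, Finset.mul_sum]
      rw [Finset.sum_comm]
      refine Finset.sum_congr rfl fun α _ => ?_
      exact Fintype.sum_equiv (α : MulAut G).toEquiv _ _ fun g => by simp [hfA α α.2 g]
    rw [h0, Finset.sum_const, nsmul_eq_mul] at h1
    exact (mul_eq_zero.1 h1.symm).resolve_left (by simp [Fintype.card_ne_zero])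
  refine eq_zero_of_sum_cyclic f hfz fun c => ?_
  have h2 := sum_mul_permRep_character (Subgroup.zpowers c) f fun x g =>
    hfA _ (hA ⟨x, rfl⟩) g
  rw [sum_mul_character_eq_zero f hV _ _ rfl] at h2
  rw [Finset.sum_filter]
  exact (mul_eq_zero.1 h2.symm).resolve_left (by simp)

end Orb

/-- Let `G` be a finite group and `A ≤ Aut(G)` a subgroup containing `Inn(G)`.  Then the
number of `A`-orbits on the set of isomorphism classes of irreducible finite-dimensional
rational representations of `G` equals the number of ℚ-`A`-conjugacy classes of elements
of `G`. -/
theorem card_rat_irr_orbits_eq_card_QConjClasses (G : Type*) [Group G] [Finite G]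
    (A : Subgroup (MulAut G)) (hA : MulAut.conj.range ≤ A) :
    Nat.card (Quot (repRel (K := ℚ) (G := G) A)) = Nat.card (Quot (QConjRel A)) := by
  classical
  have := Fintype.ofFinite G
  have := Fintype.ofFinite A
  have := Fintype.ofFinite (Quot (QConjRel A))
  let X : Quot (repRel (K := ℚ) (G := G) A) → (Quot (QConjRel A) → ℚ) :=
    Quot.lift (fun V => Quot.lift (orbitChar A V) fun _ _ h => orbitChar_eq_of_qConjRel A V h)
      fun V W h => by
        funext q
        induction q using Quot.ind with
        | mk g => exact congrFun (orbitChar_eq_of_repRel A h) g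
  -- The inner product of functions on classes, weighted by class size: it is pulled back from the
  -- standard inner product of functions on `G`.
  let P : (Quot (QConjRel A) → ℚ) →ₗ[ℚ] (G → ℚ) := LinearMap.funLeft ℚ ℚ (Quot.mk _)
  let B : LinearMap.BilinForm ℚ (Quot (QConjRel A) → ℚ) := (dotProductBilin ℚ ℚ).compl₁₂ P P
  have hB : ∀ u v, B u v = ∑ g, u (Quot.mk _ g) * v (Quot.mk _ g) := fun u v => rfl
  have hBnd : ∀ u, B u u = 0 → u = 0 := by
    intro u hu
    rw [hB, Finset.sum_eq_zero_iff_of_nonneg fun _ _ => mul_self_nonneg _] at hu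
    funext q
    induction q using Quot.ind with
    | mk g => simpa using hu g (Finset.mem_univ g)
  have hXX : B.IsOrthoᵢ X := by
    rw [LinearMap.isOrthoᵢ_def]
    intro p q hpq
    induction p using Quot.ind with
    | mk V =>
      induction q using Quot.ind with
      | mk W => exact sum_orbitChar_mul_eq_zero A fun h => hpq (Quot.sound h)
  have hli : LinearIndependent ℚ X := by
    refine LinearMap.linearIndependent_of_isOrthoᵢ hXX fun q hq => ?_
    have h0 := hBnd _ hq
    induction q using Quot.ind with
    | mk V => exact orbitChar_one_ne_zero A V (congrFun h0 (Quot.mk _ 1))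
  have hspan : Submodule.span ℚ (Set.range X) = ⊤ := by
    have hrefl : B.IsRefl := fun u v huv => by
      rw [hB] at huv ⊢
      rw [← huv]
      exact Finset.sum_congr rfl fun g _ => mul_comm _ _
    have hbot : B.orthogonal (Submodule.span ℚ (Set.range X)) = ⊥ := by
      rw [eq_bot_iff]
      intro u hu
      rw [LinearMap.BilinForm.mem_orthogonal_iff] at hu
      have h0 := eq_zero_of_orbitChar_orthogonal A hA (fun g => u (Quot.mk _ g))
        (fun g h hgh => congrArg u (Quot.sound hgh)) fun V =>
          hrefl _ _ (hu (X (Quot.mk _ V)) (Submodule.subset_span ⟨Quot.mk _ V, rfl⟩))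
      rw [Submodule.mem_bot]
      funext q
      induction q using Quot.ind with
      | mk g => exact congrFun h0 g
    have hc := (LinearMap.BilinForm.isCompl_orthogonal_iff_disjoint hrefl).2
      (hbot ▸ disjoint_bot_right)
    simpa only [hbot, sup_bot_eq] using hc.sup_eq_top
  have b := Module.Basis.mk hli hspan.ge
  have h1 := Module.finrank_eq_nat_card_basis b
  rw [Module.finrank_fintype_fun_eq_card] at h1
  rw [← h1, Nat.card_eq_fintype_card]
end

section
/- Let G be a finite 2-group and let g ∈ G be an element of order 8 such that g⁴ lies in the center Z(G) and g does not lie in the Frattini subgroup Φ(G). Then there exists an automorphism α of G with α(g) = g⁵. In particular, all generators of the cyclic subgroup ⟨g⟩ are ℝ-Aut(G)-conjugate to g. -/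
/-!
Since `g ∉ Φ(G)`, some maximal subgroup `M` misses `g`, and `M` has index 2 because `G` is a
2-group. The element `z = g⁴ = (g²)²` is central, has order 2 and lies in `M`, so the map that
fixes `M` pointwise and multiplies `G \ M` by `z` is an involutive automorphism of `G`; it sends
`g` to `g⁵`. The generators of `⟨g⟩` are `g`, `g³ = (g⁻¹)⁵`, `g⁵` and `g⁷ = g⁻¹`, so each of them
is the image of `g` or `g⁻¹` under the identity or under this automorphism.
-/

/-- A proper subgroup of order `2 ^ m` in a 2-group is contained in one of order `2 ^ (m + 1)`,
which has to be the whole group when the former is maximal. -/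
theorem index_eq_two_of_isCoatom {G : Type*} [Group G] [Finite G] (hG : IsPGroup 2 G)
    {M : Subgroup G} (hM : IsCoatom M) : M.index = 2 := by
  have : Fact (Nat.Prime 2) := ⟨Nat.prime_two⟩
  obtain ⟨n, hn⟩ := IsPGroup.iff_card.mp hG
  obtain ⟨m, hm⟩ := IsPGroup.iff_card.mp (hG.to_subgroup M)
  have hmul := M.card_mul_index
  have hlt : m < n := by
    by_contra! h
    refine hM.1 (Subgroup.eq_top_of_le_card M ?_)
    rw [hn, hm]
    exact Nat.pow_le_pow_right (by norm_num) h
  obtain ⟨K, hK, hMK⟩ := Sylow.exists_subgroup_card_pow_succ (p := 2) (n := m)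
    (hn ▸ pow_dvd_pow 2 hlt) hm
  have hKtop : K = ⊤ := by
    refine hM.2 K (lt_of_le_of_ne hMK ?_)
    rintro rfl
    rw [hm] at hK
    exact absurd (Nat.pow_right_injective le_rfl hK) (by omega)
  rw [hKtop, Subgroup.card_top] at hK
  rw [hm, hK, pow_succ] at hmul
  exact Nat.eq_of_mul_eq_mul_left (by positivity) hmul

open Classical in
/-- The automorphism fixing the index-2 subgroup `M` pointwise and multiplying the elements
outside `M` by the central element `z ∈ M` with `z * z = 1`. -/
noncomputable def centralTwist {G : Type*} [Group G] (M : Subgroup G) (hM : M.index = 2)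
    (z : G) (hz : z ∈ Subgroup.center G) (hzM : z ∈ M) (hzz : z * z = 1) : MulAut G where
  toFun x := if x ∈ M then x else x * z
  invFun x := if x ∈ M then x else x * z
  left_inv x := by
    by_cases hx : x ∈ M
    · simp [hx]
    · simp [hx, M.mul_mem_cancel_right hzM, mul_assoc, hzz]
  right_inv x := by
    by_cases hx : x ∈ M
    · simp [hx]
    · simp [hx, M.mul_mem_cancel_right hzM, mul_assoc, hzz]
  map_mul' x y := by
    have hc : ∀ a, a * z = z * a := Subgroup.mem_center_iff.mp hz
    have hxy := Subgroup.mul_mem_iff_of_index_two hM (a := x) (b := y)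
    by_cases hx : x ∈ M <;> by_cases hy : y ∈ M
    · simp [hx, hy, hxy]
    · simp [hx, hy, hxy, mul_assoc]
    · simp [hx, hy, hxy, mul_assoc, hc y]
    · have h : x * z * (y * z) = x * y := by
        rw [mul_assoc, ← mul_assoc z, ← hc y, mul_assoc y, hzz, mul_one]
      simp [hx, hy, hxy, h]

theorem centralTwist_of_notMem {G : Type*} [Group G] (M : Subgroup G) (hM : M.index = 2)
    (z : G) (hz : z ∈ Subgroup.center G) (hzM : z ∈ M) (hzz : z * z = 1) {x : G} (hx : x ∉ M) :
    centralTwist M hM z hz hzM hzz x = x * z :=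
  if_neg hx

/-- Let `G` be a finite 2-group and `g ∈ G` of order 8 with `g⁴ ∈ Z(G)` and
`g ∉ Φ(G)` (the Frattini subgroup).  Then some automorphism of `G` sends `g` to `g⁵`;
in particular, every generator of `⟨g⟩` is ℝ-Aut(G)-conjugate to `g`. -/
theorem aut_sends_g_to_g5 (G : Type*) [Group G] [Finite G] (hG : IsPGroup 2 G)
    (g : G) (hord : orderOf g = 8) (hcen : g ^ 4 ∈ Subgroup.center G)
    (hfrat : g ∉ frattini G) :
    (∃ α : MulAut G, α g = g ^ 5) ∧
    ∀ h : G, Subgroup.zpowers h = Subgroup.zpowers g →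
      ∃ α : MulAut G, α g = h ∨ α g⁻¹ = h := by
  have h8 : g ^ 8 = 1 := hord ▸ pow_orderOf_eq_one g
  have key : ∃ α : MulAut G, α g = g ^ 5 := by
    obtain ⟨M, hM, hgM⟩ : ∃ M : Subgroup G, IsCoatom M ∧ g ∉ M := by
      by_contra! h
      refine hfrat ?_
      simp only [frattini, Order.radical, Subgroup.mem_iInf]
      exact fun M hM => h M hM
    have hidx := index_eq_two_of_isCoatom hG hM
    have hzM : g ^ 4 ∈ M := by
      have h2 := Subgroup.sq_mem_of_index_two hidx (g ^ 2)
      rwa [← pow_mul] at h2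
    refine ⟨centralTwist M hidx (g ^ 4) hcen hzM (by rw [← pow_add, h8]), ?_⟩
    rw [centralTwist_of_notMem _ _ _ _ _ _ hgM, ← pow_succ']
  refine ⟨key, fun h hh => ?_⟩
  obtain ⟨α, hα⟩ := key
  have hmem : h ∈ Subgroup.zpowers g := hh ▸ Subgroup.mem_zpowers h
  obtain ⟨k, hk, rfl⟩ : ∃ k < 8, g ^ k = h := by
    obtain ⟨k, rfl⟩ := (mem_powers_iff_mem_zpowers (x := g)).mpr hmem
    exact ⟨k % 8, Nat.mod_lt _ (by norm_num), by rw [← hord, pow_mod_orderOf]⟩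
  have hcop : (8 : ℕ).gcd k = 1 := by
    have ho : orderOf (g ^ k) = 8 := by
      rw [← Nat.card_zpowers, hh, Nat.card_zpowers, hord]
    rw [orderOf_pow, hord] at ho
    interval_cases k <;> simp_all
  have hinv : ∀ a b : ℕ, a + b = 8 → (g ^ a)⁻¹ = g ^ b := fun a b hab =>
    inv_eq_of_mul_eq_one_right (by rw [← pow_add, hab, h8])
  interval_cases k <;> try (exfalso; revert hcop; decide)
  · exact ⟨1, Or.inl (by simp)⟩
  · exact ⟨α, Or.inr (by rw [map_inv, hα, hinv 5 3 rfl])⟩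
  · exact ⟨α, Or.inl hα⟩
  · exact ⟨1, Or.inr (by simpa using hinv 1 7 rfl)⟩
end
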